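/- arXiv:2507.11672 — 2 statements merged into one kernel-verified Lean document; each statement's English description precedes it below -/
import Mathlib

section
/- Let S be a nonempty finite set of integers, each at least 2, with 1 ≤ |S| ≤ 3, and assume that lcm(S) has at most two distinct prime factors. Then MIN(S) = FIB(S). -/
open Polynomial

/-- The mask polynomial of a finite set of natural numbers: `A(X) = ∑_{a ∈ A} X^a`. -/
noncomputable def maskPoly (A : Finset ℕ) : Polynomial ℤ := ∑ a ∈ A, X ^ a

/-- The fiber polynomial `F^N_p(X) = 1 + X^{N/p} + ⋯ + X^{(p-1)N/p}`. -/
noncomputable def fiberPoly (N p : ℕ) : Polynomial ℤ :=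
  ∑ j ∈ Finset.range p, X ^ (j * (N / p))

/-- A finite set `A ⊆ ℕ` is fibered on scale `N` if some prime `p ∣ N` has
`F^N_p(X) ∣ A(X)`. -/
def IsFibered (A : Finset ℕ) (N : ℕ) : Prop :=
  ∃ p : ℕ, p.Prime ∧ p ∣ N ∧ fiberPoly N p ∣ maskPoly A

/-- `MIN(S)`: the minimal size of a nonempty finite `A ⊆ ℕ` with `Φ_s ∣ A(X)` for all `s ∈ S`. -/
noncomputable def MINs (S : Finset ℕ) : ℕ :=
  sInf {k | ∃ A : Finset ℕ, A.Nonempty ∧ A.card = k ∧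
    ∀ s ∈ S, cyclotomic s ℤ ∣ maskPoly A}

/-- `FIB(S)`: the minimal size of a nonempty finite `A ⊆ ℕ` fibered on each scale `s ∈ S`. -/
noncomputable def FIBs (S : Finset ℕ) : ℕ :=
  sInf {k | ∃ A : Finset ℕ, A.Nonempty ∧ A.card = k ∧ ∀ s ∈ S, IsFibered A s}

/-!
Let `p` and `q` be distinct primes such that every element of `S` has the form `p ^ a * q ^ b`, and
let `A` attain `MIN(S)`. Reducing `A(X)` modulo `X ^ s - 1` turns `Φ_s ∣ A(X)` into a condition on
residue class counts: for `s = p ^ (a + 1)`, the count modulo `s` depends only on the class modulo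
`p ^ a`, and for `s = p ^ (a + 1) * q ^ (b + 1)`, the counts are locally of the form `u x + v y`.

Conversely, if every pair `(a, b)` of exponents satisfies `a ∈ E` or `b ∈ F`, then multiplying
`1` by one fiber polynomial in direction `p` for each element of `E` and one in direction `q` for
each element of `F` gives a set with `p ^ #E * q ^ #F` elements fibered on all scales in `S`. It
therefore suffices to find such `E` and `F` with `p ^ #E * q ^ #F ≤ #A`.

Let `a` be the smallest exponent of `p`. If all `p` subclasses modulo `p ^ a` of some class modulo
`p ^ (a - 1)` meet `A`, put `a` in `E` and continue with the smallest of these parts of `A`, which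
has at most `#A / p` elements and inherits the condition of every pair with a larger exponent of
`p`. Otherwise every pair `(a, b)` makes the counts in direction `q` uniform at level `b`. If
neither prime allows a reduction, the uniform levels form a cover whose product divides `#A`, unless
some pair is not covered by them. There is at most one such pair if `#S ≤ 3`, and its condition
gives `p * q * min p q ≤ #A`, which pays for a cover of all three pairs.
-/

section

open Finset

/-! ### Residue classes and digits -/

/-- The part of `A` in the residue class of `r` modulo `m`. -/
def residueSlice (A : Finset ℕ) (m r : ℕ) : Finset ℕ := {n ∈ A | n ≡ r [MOD m]}

/-- The elements of `A` whose digit of weight `M` in base `p` is `i` (for `M` a power of `p`).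
The digit `i` is only read modulo `p`. -/
def digitSlice (A : Finset ℕ) (M p i : ℕ) : Finset ℕ := {n ∈ A | n / M ≡ i [MOD p]}

variable {A : Finset ℕ} {M L m n p q x x' y i j : ℕ}

theorem modEq_mul_iff_modEq_div :
    n ≡ x [MOD M * p] ↔ n ≡ x [MOD M] ∧ n / M ≡ x / M [MOD p] := by
  refine ⟨fun h => ⟨h.of_mul_right p, ?_⟩, fun ⟨h₁, h₂⟩ => ?_⟩
  · simp only [Nat.ModEq, ← Nat.mod_mul_right_div_self]
    rw [h]
  · simp only [Nat.ModEq, Nat.mod_mul] at *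
    rw [h₁, h₂]

theorem residueSlice_congr (h : x ≡ x' [MOD m]) : residueSlice A m x = residueSlice A m x' :=
  filter_congr fun _ _ => ⟨(·.trans h), (·.trans h.symm)⟩

theorem digitSlice_congr (h : i ≡ j [MOD p]) : digitSlice A M p i = digitSlice A M p j :=
  filter_congr fun _ _ => ⟨(·.trans h), (·.trans h.symm)⟩

@[simp]
theorem residueSlice_one : residueSlice A 1 x = A := by
  simp [residueSlice, Nat.modEq_one]

@[simp]
theorem residueSlice_empty : residueSlice ∅ m x = ∅ := rfl

theorem residueSlice_comm :
    residueSlice (residueSlice A m x) n y = residueSlice (residueSlice A n y) m x :=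
  filter_comm ..

theorem digitSlice_comm :
    digitSlice (digitSlice A M p i) L q j = digitSlice (digitSlice A L q j) M p i :=
  filter_comm ..

theorem residueSlice_mul :
    residueSlice A (M * p) x = digitSlice (residueSlice A M x) M p (x / M) := by
  simp only [residueSlice, digitSlice, filter_filter, modEq_mul_iff_modEq_div]

theorem card_eq_sum_card_modEq (A : Finset ℕ) (f : ℕ → ℕ) (hp : 0 < p) :
    #A = ∑ i ∈ range p, #{n ∈ A | f n ≡ i [MOD p]} := by
  rw [card_eq_sum_card_fiberwise (f := (f · % p)) (t := range p)
    fun n _ => by simpa using Nat.mod_lt _ hp]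
  refine sum_congr rfl fun i hi => ?_
  simp only [Nat.ModEq, Nat.mod_eq_of_lt (mem_range.mp hi)]

theorem card_eq_sum_card_residueSlice (A : Finset ℕ) (hm : 0 < m) :
    #A = ∑ x ∈ range m, #(residueSlice A m x) :=
  card_eq_sum_card_modEq A id hm

theorem card_eq_sum_card_digitSlice (A : Finset ℕ) (M : ℕ) (hp : 0 < p) :
    #A = ∑ i ∈ range p, #(digitSlice A M p i) :=
  card_eq_sum_card_modEq A (· / M) hp

theorem digitSlice_residueSlice_add_mul (hM : 0 < M) (i : ℕ) (hx : x < M) :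
    digitSlice (residueSlice A M x) M p i = residueSlice A (M * p) (x + i * M) := by
  rw [residueSlice_mul, Nat.add_mul_div_right _ _ hM, Nat.div_eq_of_lt hx, zero_add]
  exact congrArg (digitSlice · M p i)
    (residueSlice_congr (by simp [Nat.ModEq]))

theorem card_digitSlice_eq_sum (A : Finset ℕ) (hM : 0 < M) (p i : ℕ) :
    #(digitSlice A M p i) = ∑ x ∈ range M, #(residueSlice A (M * p) (x + i * M)) := by
  rw [card_eq_sum_card_residueSlice _ hM]
  refine sum_congr rfl fun x hx => ?_
  rw [← digitSlice_residueSlice_add_mul hM i (mem_range.mp hx)]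
  exact congrArg card (filter_comm ..)

theorem card_residueSlice_eq_sum (A : Finset ℕ) (hM : 0 < M) (hp : 0 < p) (x : ℕ) :
    #(residueSlice A M x) = ∑ i ∈ range p, #(residueSlice A (M * p) (x % M + i * M)) := by
  rw [residueSlice_congr (x' := x % M) (Nat.mod_modEq x M).symm,
    card_eq_sum_card_digitSlice _ M hp]
  simp only [digitSlice_residueSlice_add_mul hM _ (Nat.mod_lt x hM)]

/-! ### Uniform and balanced sets -/

theorem residueSlice_filter {P : ℕ → Prop} [DecidablePred P]
    (hP : ∀ x x', x ≡ x' [MOD m] → (P x ↔ P x')) :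
    residueSlice {n ∈ A | P n} m x = if P x then residueSlice A m x else ∅ := by
  ext n
  have := hP n x
  split_ifs <;> simp [residueSlice] <;> tauto

/-- `A` is uniform for `(M, p)` if it meets the residue classes modulo `M * p` which lie in the
same class modulo `M` equally often. For `M = p ^ a`, this is what `Φ_{p ^ (a + 1)} ∣ A(X)`
means. -/
def IsUniform (A : Finset ℕ) (M p : ℕ) : Prop :=
  ∀ x x', x ≡ x' [MOD M] → #(residueSlice A (M * p) x) = #(residueSlice A (M * p) x')

namespace IsUniform

theorem card_residueSlice (h : IsUniform A M p) (hM : 0 < M) (hp : 0 < p) (x : ℕ) :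
    #(residueSlice A M x) = p * #(residueSlice A (M * p) x) := by
  rw [card_residueSlice_eq_sum A hM hp,
    sum_congr rfl fun i _ => h (x % M + i * M) x (by simp [Nat.ModEq])]
  simp

theorem card_eq_mul (h : IsUniform A M p) (hM : 0 < M) (hp : 0 < p) (i : ℕ) :
    #A = p * #(digitSlice A M p i) := by
  rw [card_eq_sum_card_digitSlice A M hp, sum_congr rfl fun j _ =>
    show #(digitSlice A M p j) = #(digitSlice A M p i) by
      simp only [card_digitSlice_eq_sum A hM]
      exact sum_congr rfl fun x _ => h _ _ (by simp [Nat.ModEq])]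
  simp

theorem filter (h : IsUniform A M p) {P : ℕ → Prop} [DecidablePred P]
    (hP : ∀ x x', x ≡ x' [MOD M] → (P x ↔ P x')) : IsUniform {n ∈ A | P n} M p := by
  intro x x' hx
  have hPM : ∀ y y', y ≡ y' [MOD M * p] → (P y ↔ P y') := fun y y' hy => hP y y' (hy.of_mul_right p)
  simp only [residueSlice_filter hPM, hP x x' hx]
  split_ifs
  exacts [h x x' hx, rfl]

theorem of_filter {f : ℕ → ℕ} (hm : 0 < m)
    (h : ∀ i, IsUniform {n ∈ A | f n ≡ i [MOD m]} M p) : IsUniform A M p := by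
  intro x x' hx
  rw [card_eq_sum_card_modEq (residueSlice A (M * p) x) f hm,
    card_eq_sum_card_modEq (residueSlice A (M * p) x') f hm]
  exact sum_congr rfl fun i _ => (congrArg card (filter_comm ..)).trans
    ((h i x x' hx).trans (congrArg card (filter_comm ..)))

end IsUniform

/-- `A` is balanced for `(M, p)` and `(L, q)` if the numbers of elements of `A` in the classes of
`x` modulo `M * p` and `y` modulo `L * q` satisfy the exchange relation of a sum `u x + v y`, as
long as `x` moves in a class modulo `M` and `y` in a class modulo `L`. For `M = p ^ a` and
`L = q ^ b`, this is what `Φ_{p ^ (a + 1) * q ^ (b + 1)} ∣ A(X)` means. -/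
def IsBalanced (A : Finset ℕ) (M p L q : ℕ) : Prop :=
  ∀ x x' y y', x ≡ x' [MOD M] → y ≡ y' [MOD L] →
    #(residueSlice (residueSlice A (M * p) x) (L * q) y) +
      #(residueSlice (residueSlice A (M * p) x') (L * q) y') =
    #(residueSlice (residueSlice A (M * p) x) (L * q) y') +
      #(residueSlice (residueSlice A (M * p) x') (L * q) y)

/-- The entries of `f` satisfy the exchange relation which characterises the matrices of the form
`u i + v j`. -/
def IsAdditive {ι κ : Type*} (f : ι → κ → ℕ) : Prop :=
  ∀ i i' j j', f i j + f i' j' = f i j' + f i' j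

namespace IsBalanced

theorem swap (h : IsBalanced A M p L q) : IsBalanced A L q M p := by
  intro y y' x x' hy hx
  simp only [residueSlice_comm (m := L * q)]
  rw [h x x' y y' hx hy, add_comm]

theorem filter (h : IsBalanced A M p L q) {P : ℕ → Prop} [DecidablePred P]
    (hP : ∀ x x', x ≡ x' [MOD M] → (P x ↔ P x')) : IsBalanced {n ∈ A | P n} M p L q := by
  intro x x' y y' hx hy
  have hPM : ∀ z z', z ≡ z' [MOD M * p] → (P z ↔ P z') := fun z z' hz => hP z z' (hz.of_mul_right p)
  simp only [residueSlice_filter hPM, hP x x' hx]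
  split_ifs
  exacts [h x x' y y' hx hy, rfl]

theorem isAdditive_card_digitSlice (h : IsBalanced A M p L q) (hM : 0 < M) (hL : 0 < L) :
    IsAdditive fun i j => #(digitSlice (digitSlice A M p i) L q j) := by
  have hcells (i j) : #(digitSlice (digitSlice A M p i) L q j) =
      ∑ x ∈ range M, ∑ y ∈ range L,
        #(residueSlice (residueSlice A (M * p) (x + i * M)) (L * q) (y + j * L)) := by
    rw [digitSlice_comm, card_digitSlice_eq_sum _ hM]
    refine sum_congr rfl fun x _ => ?_
    rw [← card_digitSlice_eq_sum _ hL]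
    exact congrArg card (filter_comm ..)
  intro i i' j j'
  simp only [hcells, ← sum_add_distrib]
  exact sum_congr rfl fun x _ => sum_congr rfl fun y _ =>
    h _ _ _ _ (by simp [Nat.ModEq]) (by simp [Nat.ModEq])

end IsBalanced

/-! ### Additive matrices -/

namespace IsAdditive

variable {ι κ : Type*} {f : ι → κ → ℕ} {s : Finset ι} {t : Finset κ}

theorem exists_eq_add [Nonempty ι] (h : IsAdditive f) (ht : t.Nonempty) :
    ∃ j₀ ∈ t, ∃ u : κ → ℕ, ∀ j ∈ t, ∀ i, f i j = f i j₀ + u j := by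
  obtain ⟨i₀⟩ := ‹Nonempty ι›
  obtain ⟨j₀, hj₀, hmin⟩ := exists_min_image t (f i₀) ht
  refine ⟨j₀, hj₀, fun j => f i₀ j - f i₀ j₀, fun j hj i => ?_⟩
  have := hmin j hj
  have := h i i₀ j j₀
  dsimp only
  omega

/-- `V` is the smallest column sum, and `U` is the total excess of a row over its minimum. -/
theorem exists_sum_eq [Nonempty ι] (h : IsAdditive f) (s : Finset ι) (t : Finset κ) :
    ∃ U V, ∑ i ∈ s, ∑ j ∈ t, f i j = #s * U + #t * V ∧
      (U = 0 → ∀ i, ∀ j ∈ t, ∀ j' ∈ t, f i j = f i j') := by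
  rcases t.eq_empty_or_nonempty with rfl | ht
  · exact ⟨0, 0, by simp⟩
  obtain ⟨j₀, -, u, hu⟩ := h.exists_eq_add ht
  refine ⟨∑ j ∈ t, u j, ∑ i ∈ s, f i j₀, ?_, fun hU i j hj j' hj' => ?_⟩
  · rw [sum_congr rfl fun i _ => sum_congr rfl fun j hj => hu j hj i]
    simp [sum_add_distrib, mul_sum, add_comm]
  · rw [hu j hj, hu j' hj', sum_eq_zero_iff.mp hU j hj, sum_eq_zero_iff.mp hU j' hj']

theorem mul_min_le_sum [Nonempty ι] (h : IsAdditive f) (hst : (#s).Coprime #t)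
    (hrow : ∀ i ∈ s, #s ∣ ∑ j ∈ t, f i j) (hcol : ∀ j ∈ t, #t ∣ ∑ i ∈ s, f i j)
    (hpos : 0 < ∑ i ∈ s, ∑ j ∈ t, f i j) :
    #s * #t * min #s #t ≤ ∑ i ∈ s, ∑ j ∈ t, f i j := by
  obtain ⟨i₁, hi₁, hi₁pos⟩ := exists_ne_zero_of_sum_ne_zero hpos.ne'
  have ht : t.Nonempty := nonempty_of_sum_ne_zero hi₁pos
  obtain ⟨j₀, hj₀, u, hu⟩ := h.exists_eq_add ht
  set U := ∑ j ∈ t, u j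
  set V := ∑ i ∈ s, f i j₀
  have hcolsum (j) (hj : j ∈ t) : ∑ i ∈ s, f i j = V + #s * u j := by
    rw [sum_congr rfl fun i _ => hu j hj i, sum_add_distrib, sum_const, smul_eq_mul]
  have htotal : ∑ i ∈ s, ∑ j ∈ t, f i j = #s * U + #t * V := by
    rw [sum_comm, sum_congr rfl hcolsum, sum_add_distrib, sum_const, smul_eq_mul, ← mul_sum,
      add_comm]
  have htV : #t ∣ V := hcol j₀ hj₀
  have hsV : #s ∣ V := by
    have : #s ∣ #s * U + #t * V := htotal ▸ dvd_sum hrow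
    exact hst.dvd_of_dvd_mul_left ((Nat.dvd_add_right (dvd_mul_right ..)).mp this)
  have htU : #t ∣ U := dvd_sum fun j hj => by
    have := hcolsum j hj ▸ hcol j hj
    exact hst.symm.dvd_of_dvd_mul_left ((Nat.dvd_add_right htV).mp this)
  rw [htotal] at hpos ⊢
  rcases V.eq_zero_or_pos with hV0 | hVpos
  · have hsU : #s ∣ U := by
      have hrowsum : ∑ j ∈ t, f i₁ j = U :=
        sum_congr rfl fun j hj => by rw [hu j hj, sum_eq_zero_iff.mp hV0 i₁ hi₁, zero_add]
      exact hrowsum ▸ hrow i₁ hi₁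
    have hUpos : 0 < U := Nat.pos_of_ne_zero fun hU0 => by simp [hU0, hV0] at hpos
    have : #s * #t ≤ U := Nat.le_of_dvd hUpos (hst.mul_dvd_of_dvd_of_dvd hsU htU)
    calc #s * #t * min #s #t ≤ U * #s := Nat.mul_le_mul this (min_le_left ..)
      _ ≤ #s * U + #t * V := by rw [mul_comm]; exact Nat.le_add_right ..
  · have : #s * #t ≤ V := Nat.le_of_dvd hVpos (hst.mul_dvd_of_dvd_of_dvd hsV htV)
    calc #s * #t * min #s #t ≤ V * #t := Nat.mul_le_mul this (min_le_right ..)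
      _ ≤ #s * U + #t * V := by rw [mul_comm]; exact Nat.le_add_left ..

end IsAdditive

/-! ### Two balanced directions -/

namespace IsBalanced

theorem exists_card_eq_and_digitSlice (h : IsBalanced A M p L q) (hM : 0 < M) (hL : 0 < L)
    (hp : 0 < p) (hq : 0 < q) : ∃ U V, #A = p * U + q * V ∧
      (U = 0 → ∀ j j', #(digitSlice A L q j) = #(digitSlice A L q j')) := by
  have hsum (j) : #(digitSlice A L q j) =
      ∑ i ∈ range p, #(digitSlice (digitSlice A M p i) L q j) := by
    simp only [digitSlice_comm (M := M), ← card_eq_sum_card_digitSlice _ M hp]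
  obtain ⟨U, V, hUV, hU⟩ :=
    (h.isAdditive_card_digitSlice hM hL).exists_sum_eq (range p) (range q)
  refine ⟨U, V, ?_, fun hU0 => ?_⟩
  · simpa only [← card_eq_sum_card_digitSlice _ L hq, ← card_eq_sum_card_digitSlice _ M hp,
      card_range] using hUV
  · have hlt (j j') (hj : j < q) (hj' : j' < q) :
        #(digitSlice A L q j) = #(digitSlice A L q j') := by
      rw [hsum, hsum]
      exact sum_congr rfl fun i _ => hU hU0 i j (mem_range.mpr hj) j' (mem_range.mpr hj')
    intro j j'
    rw [← digitSlice_congr (Nat.mod_modEq j q), ← digitSlice_congr (Nat.mod_modEq j' q)]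
    exact hlt _ _ (Nat.mod_lt _ hq) (Nat.mod_lt _ hq)

/-- The first part is the theorem of Lam and Leung on vanishing sums of roots of unity, for two
primes. -/
theorem exists_card_eq (h : IsBalanced A M p L q) (hM : 0 < M) (hL : 0 < L) (hp : 0 < p)
    (hq : 0 < q) : ∃ U V, #A = p * U + q * V ∧ (U = 0 → IsUniform A L q) := by
  have hslice (y) : IsBalanced (residueSlice A L y) M p L q :=
    (h.swap.filter fun _ _ hx => ⟨hx.symm.trans, hx.trans⟩).swap
  choose U V hUV hU using fun y => (hslice y).exists_card_eq_and_digitSlice hM hL hp hq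
  refine ⟨∑ y ∈ range L, U y, ∑ y ∈ range L, V y, ?_, fun hU0 x x' hx => ?_⟩
  · simp only [card_eq_sum_card_residueSlice A hL, hUV, sum_add_distrib, mul_sum]
  · rw [residueSlice_mul, residueSlice_mul, residueSlice_congr hx.symm,
      ← residueSlice_congr (Nat.mod_modEq x L)]
    exact hU _ (sum_eq_zero_iff.mp hU0 _ (mem_range.mpr (Nat.mod_lt x hL))) _ _

theorem isUniform_or_le (h : IsBalanced A M p L q) (hM : 0 < M) (hL : 0 < L) (hp : 0 < p)
    (hq : 0 < q) (hpq : p.Coprime q) (hA : q ∣ #A) : IsUniform A L q ∨ p * q ≤ #A := by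
  obtain ⟨U, V, hUV, hU⟩ := h.exists_card_eq hM hL hp hq
  rcases U.eq_zero_or_pos with hU0 | hUpos
  · exact .inl (hU hU0)
  · have hqU : q ∣ U :=
      hpq.symm.dvd_of_dvd_mul_left ((Nat.dvd_add_left (dvd_mul_right ..)).mp (hUV ▸ hA))
    exact .inr (hUV ▸ (Nat.mul_le_mul_left p (Nat.le_of_dvd hUpos hqU)).trans
      (Nat.le_add_right ..))

end IsBalanced

/-! ### Levels -/

/-- The combinatorial form of `Φ_{p ^ e} ∣ A(X)`, see `isUniformLevel_of_cyclotomic_dvd`. The level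
`0` stands for `Φ_1 = X - 1`, which divides `A(X)` only if `A` is empty. -/
def IsUniformLevel (A : Finset ℕ) (p : ℕ) : ℕ → Prop
  | 0 => A = ∅
  | e + 1 => IsUniform A (p ^ e) p

@[simp]
theorem isUniformLevel_succ {e : ℕ} : IsUniformLevel A p (e + 1) ↔ IsUniform A (p ^ e) p :=
  .rfl

variable {a b c d e : ℕ} {E F : Finset ℕ}

theorem pow_card_dvd_card_residueSlice (hp : 0 < p) (hE : ∀ e ∈ E, IsUniformLevel A p e)
    {k : ℕ} (hk : ∀ e ∈ E, k < e) (x : ℕ) : p ^ #E ∣ #(residueSlice A (p ^ k) x) := by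
  induction E using Finset.induction_on_min generalizing k x with
  | empty => simp
  | insert e E he ih =>
    obtain ⟨e, rfl⟩ := Nat.exists_eq_add_one_of_ne_zero (hk e (mem_insert_self e E)).ne_bot
    obtain ⟨m, rfl⟩ := Nat.exists_eq_add_of_le (Nat.le_of_lt_succ (hk _ (mem_insert_self _ E)))
    have huniform : IsUniform A (p ^ (k + m)) p := hE _ (mem_insert_self _ E)
    rw [card_insert_of_notMem fun h => (he _ h).false, pow_succ',
      card_residueSlice_eq_sum A (pow_pos hp k) (pow_pos hp m), ← pow_add]
    refine dvd_sum fun i _ => ?_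
    rw [huniform.card_residueSlice (pow_pos hp _) hp, ← pow_succ]
    exact Nat.mul_dvd_mul_left p (ih (fun e he => hE e (mem_insert_of_mem he)) he _)

theorem pow_card_mul_pow_card_dvd_card (hp : 0 < p) (hq : 0 < q) (hpq : p.Coprime q)
    (hE : ∀ e ∈ E, IsUniformLevel A p e) (hF : ∀ e ∈ F, IsUniformLevel A q e) :
    p ^ #E * q ^ #F ∣ #A := by
  rcases A.eq_empty_or_nonempty with rfl | hA
  · simp
  have hdvd {p : ℕ} (hp : 0 < p) {E : Finset ℕ} (hE : ∀ e ∈ E, IsUniformLevel A p e) :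
      p ^ #E ∣ #A := by
    simpa using pow_card_dvd_card_residueSlice hp hE (k := 0)
      (fun e he => Nat.pos_of_ne_zero fun h0 => hA.ne_empty (hE 0 (h0 ▸ he))) 0
  exact (hpq.pow _ _).mul_dvd_of_dvd_of_dvd (hdvd hp hE) (hdvd hq hF)

/-! ### The lower bound for three levels -/

namespace IsBalanced

theorem digitSlice_of_lt (h : IsBalanced A (p ^ a) p L q) (hca : c < a) (i : ℕ) :
    IsBalanced (digitSlice A (p ^ c) p i) (p ^ a) p L q :=
  h.filter fun _ _ hx =>
    have hdiv := (modEq_mul_iff_modEq_div.mp (hx.of_dvd (pow_dvd_pow p hca))).2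
    ⟨hdiv.symm.trans, hdiv.trans⟩

theorem mul_min_le_card_of_lt (h : IsBalanced A (p ^ a) p (q ^ b) q) (hp : 0 < p) (hq : 0 < q)
    (hpq : p.Coprime q) (hA : A.Nonempty) (hc : IsUniform A (p ^ c) p)
    (hd : IsUniform A (q ^ d) q) (hca : c < a) (hdb : d ≠ b) : p * q * min p q ≤ #A := by
  have hcard := hc.card_eq_mul (pow_pos hp c) hp
  have hqdvd (i) : q ∣ #(digitSlice A (p ^ c) p i) := by
    have hqA : q ∣ #A := ⟨_, hd.card_eq_mul (pow_pos hq d) hq 0⟩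
    exact hpq.symm.dvd_of_dvd_mul_left (hcard i ▸ hqA)
  have hslice (i) := (h.digitSlice_of_lt hca i).isUniform_or_le
    (pow_pos hp a) (pow_pos hq b) hp hq hpq (hqdvd i)
  by_cases huniform : ∀ i, IsUniform (digitSlice A (p ^ c) p i) (q ^ b) q
  · have hb : IsUniform A (q ^ b) q := .of_filter hp huniform
    have hdvd : p ^ #{c + 1} * q ^ #{d + 1, b + 1} ∣ #A :=
      pow_card_mul_pow_card_dvd_card hp hq hpq
        (by simpa using hc)
        (by simpa using ⟨hd, hb⟩)
    rw [card_singleton, card_pair (by simpa using hdb), pow_one, pow_two, ← mul_assoc] at hdvd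
    exact (Nat.mul_le_mul_left _ (min_le_right p q)).trans (Nat.le_of_dvd hA.card_pos hdvd)
  · obtain ⟨i, hi⟩ := not_forall.mp huniform
    calc p * q * min p q ≤ p * q * p := Nat.mul_le_mul_left _ (min_le_left p q)
      _ = p * (p * q) := mul_comm ..
      _ ≤ #A := hcard i ▸ Nat.mul_le_mul_left p ((hslice i).resolve_left hi)

theorem mul_min_le_card_of_gt (h : IsBalanced A (p ^ a) p (q ^ b) q) (hp : 0 < p) (hq : 0 < q)
    (hpq : p.Coprime q) (hA : A.Nonempty) (hc : IsUniform A (p ^ c) p)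
    (hd : IsUniform A (q ^ d) q) (hac : a < c) (hbd : b < d) : p * q * min p q ≤ #A := by
  have hdvd {p a c : ℕ} (hp : 0 < p) (hc : IsUniform A (p ^ c) p) (hac : a < c) (i : ℕ) :
      p ∣ #(digitSlice A (p ^ a) p i) := by
    rw [card_digitSlice_eq_sum A (pow_pos hp a), ← pow_succ]
    refine dvd_sum fun x _ => ?_
    simpa using pow_card_dvd_card_residueSlice (E := {c + 1}) (k := a + 1) hp
      (by simpa using hc) (by simpa using hac) _
  have hrow (i) : ∑ j ∈ range q, #(digitSlice (digitSlice A (p ^ a) p i) (q ^ b) q j) =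
      #(digitSlice A (p ^ a) p i) := (card_eq_sum_card_digitSlice _ _ hq).symm
  have hcol (j) : ∑ i ∈ range p, #(digitSlice (digitSlice A (p ^ a) p i) (q ^ b) q j) =
      #(digitSlice A (q ^ b) q j) := by
    simp only [digitSlice_comm (M := p ^ a), ← card_eq_sum_card_digitSlice _ (p ^ a) hp]
  have hmatrix := (h.isAdditive_card_digitSlice (pow_pos hp a) (pow_pos hq b)).mul_min_le_sum
    (s := range p) (t := range q)
  simp only [hrow, hcol, card_range, ← card_eq_sum_card_digitSlice _ _ hp] at hmatrix
  exact hmatrix hpq (fun i _ => hdvd hp hc hac i) (fun j _ => hdvd hq hd hbd j) hA.card_pos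

theorem mul_min_le_card (h : IsBalanced A (p ^ a) p (q ^ b) q) (hp : 0 < p) (hq : 0 < q)
    (hpq : p.Coprime q) (hA : A.Nonempty) (hc : IsUniform A (p ^ c) p)
    (hd : IsUniform A (q ^ d) q) (hca : c ≠ a) (hdb : d ≠ b) : p * q * min p q ≤ #A := by
  rcases hca.lt_or_gt with hca' | hac
  · exact h.mul_min_le_card_of_lt hp hq hpq hA hc hd hca' hdb
  rcases hdb.lt_or_gt with hdb' | hbd
  · rw [mul_comm p, min_comm]
    exact h.swap.mul_min_le_card_of_lt hq hp hpq.symm hA hd hc hdb' hca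
  · exact h.mul_min_le_card_of_gt hp hq hpq hA hc hd hac hbd

end IsBalanced

/-! ### Covers of the levels -/

/-- The combinatorial form of `Φ_{p ^ a * q ^ b} ∣ A(X)`, see
`isBalancedLevel_of_cyclotomic_dvd`. -/
def IsBalancedLevel (A : Finset ℕ) (p q : ℕ) : ℕ → ℕ → Prop
  | 0, b => IsUniformLevel A q b
  | a + 1, 0 => IsUniformLevel A p (a + 1)
  | a + 1, b + 1 => IsBalanced A (p ^ a) p (q ^ b) q

/-- Some class modulo `p ^ (e - 1)` has all its `p` subclasses modulo `p ^ e` occupied by `A`.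
By convention this fails for `e = 0`. -/
def HasFullLevel (A : Finset ℕ) (p : ℕ) : ℕ → Prop
  | 0 => False
  | e + 1 => ∃ x, ∀ x', x' ≡ x [MOD p ^ e] → (residueSlice A (p ^ (e + 1)) x').Nonempty

/-- Every pair of exponents in `T` has its first entry in `E` or its second entry in `F`, for some
sets `E` and `F` of positive integers with `p ^ #E * q ^ #F ≤ N`. By `AdmitsCover.exists_isFibered`
such a cover produces a set with at most `N` elements fibered on the scales `p ^ a * q ^ b`,
`(a, b) ∈ T`. -/
def AdmitsCover (p q : ℕ) (T : Finset (ℕ × ℕ)) (N : ℕ) : Prop :=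
  ∃ E F : Finset ℕ, 0 ∉ E ∧ 0 ∉ F ∧ (∀ t ∈ T, t.1 ∈ E ∨ t.2 ∈ F) ∧ p ^ #E * q ^ #F ≤ N

variable {N : ℕ} {s t u : ℕ × ℕ} {T : Finset (ℕ × ℕ)}

theorem IsUniformLevel.ne_zero (h : IsUniformLevel A p e) (hA : A.Nonempty) : e ≠ 0 := by
  rintro rfl
  exact hA.ne_empty h

theorem IsUniformLevel.hasFullLevel (h : IsUniformLevel A p e) (hA : A.Nonempty) :
    HasFullLevel A p e := by
  obtain ⟨e, rfl⟩ := Nat.exists_eq_add_one_of_ne_zero (h.ne_zero hA)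
  obtain ⟨x, hx⟩ := hA
  refine ⟨x, fun x' hx' => card_pos.mp ?_⟩
  rw [pow_succ, h x' x hx']
  exact card_pos.mpr ⟨x, by simp [residueSlice, hx, Nat.ModEq.refl]⟩

theorem HasFullLevel.ne_zero (h : HasFullLevel A p e) : e ≠ 0 := by
  rintro rfl
  exact h

theorem HasFullLevel.exists_residueSlice (h : HasFullLevel A p e) (hp : 0 < p) :
    ∃ r, (residueSlice A (p ^ e) r).Nonempty ∧ p * #(residueSlice A (p ^ e) r) ≤ #A := by
  obtain _ | e := e
  · exact h.elim
  obtain ⟨x, hx⟩ := h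
  obtain ⟨i, -, hi⟩ := exists_min_image (range p)
    (fun i => #(residueSlice A (p ^ (e + 1)) (x % p ^ e + i * p ^ e))) ⟨0, by simpa⟩
  refine ⟨_, hx (x % p ^ e + i * p ^ e) (by simp [Nat.ModEq]), ?_⟩
  calc p * _ ≤ ∑ j ∈ range p, #(residueSlice A (p ^ (e + 1)) (x % p ^ e + j * p ^ e)) := by
        simpa using card_nsmul_le_sum (range p) _ _ hi
    _ = #(residueSlice A (p ^ e) x) := by
        rw [pow_succ, ← card_residueSlice_eq_sum A (pow_pos hp e) hp]
    _ ≤ #A := card_le_card (filter_subset ..)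

namespace IsBalancedLevel

theorem swap (h : IsBalancedLevel A p q a b) : IsBalancedLevel A q p b a := by
  rcases a with _ | a <;> rcases b with _ | b
  exacts [h, h, h, IsBalanced.swap h]

theorem residueSlice_of_lt (h : IsBalancedLevel A p q a b) (hea : e < a) (r : ℕ) :
    IsBalancedLevel (residueSlice A (p ^ e) r) p q a b := by
  obtain ⟨m, rfl⟩ := Nat.exists_eq_add_of_lt hea
  have hperiodic (x x') (hx : x ≡ x' [MOD p ^ (e + m)]) :
      x ≡ r [MOD p ^ e] ↔ x' ≡ r [MOD p ^ e] :=
    have hx' := hx.of_dvd (pow_dvd_pow p (Nat.le_add_right e m))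
    ⟨hx'.symm.trans, hx'.trans⟩
  cases b
  exacts [IsUniform.filter h hperiodic, IsBalanced.filter h hperiodic]

theorem isUniformLevel_of_not_hasFullLevel (h : IsBalancedLevel A p q a b) (hp : 0 < p)
    (hA : A.Nonempty) (hfull : ¬ HasFullLevel A p a) : IsUniformLevel A q b := by
  obtain _ | a := a
  · exact h
  obtain _ | b := b
  · exact (hfull (IsUniformLevel.hasFullLevel h hA)).elim
  refine IsUniform.of_filter (f := id) (pow_pos hp (a + 1)) fun x y y' hy => ?_
  obtain ⟨x', hx', hempty⟩ : ∃ x', x' ≡ x [MOD p ^ a] ∧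
      residueSlice A (p ^ a * p) x' = ∅ := by
    simpa [HasFullLevel, not_nonempty_iff_eq_empty, pow_succ] using not_exists.mp hfull x
  have hexchange := (show IsBalanced A (p ^ a) p (q ^ b) q from h) x x' y y' hx'.symm hy
  simp only [hempty, residueSlice_empty, card_empty, add_zero] at hexchange
  exact hexchange

theorem mul_min_le_card (h : IsBalancedLevel A p q a b) (hp : 0 < p) (hq : 0 < q)
    (hpq : p.Coprime q) (hA : A.Nonempty) (hc : IsUniformLevel A p c) (hd : IsUniformLevel A q d)
    (ha : a ≠ 0) (hb : b ≠ 0) (hca : c ≠ a) (hdb : d ≠ b) : p * q * min p q ≤ #A := by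
  obtain ⟨a, rfl⟩ := Nat.exists_eq_add_one_of_ne_zero ha
  obtain ⟨b, rfl⟩ := Nat.exists_eq_add_one_of_ne_zero hb
  obtain ⟨c, rfl⟩ := Nat.exists_eq_add_one_of_ne_zero (hc.ne_zero hA)
  obtain ⟨d, rfl⟩ := Nat.exists_eq_add_one_of_ne_zero (hd.ne_zero hA)
  exact IsBalanced.mul_min_le_card h hp hq hpq hA hc hd (by simpa using hca) (by simpa using hdb)

end IsBalancedLevel

namespace AdmitsCover

theorem insert_left (h : AdmitsCover p q {t ∈ T | t.1 ≠ e} m) (he : e ≠ 0) (hp : 0 < p)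
    (hN : p * m ≤ N) : AdmitsCover p q T N := by
  obtain ⟨E, F, hE, hF, hT, hle⟩ := h
  refine ⟨insert e E, F, by simp [hE, he.symm], hF, fun t ht => ?_, ?_⟩
  · have := hT t
    grind
  · calc p ^ #(insert e E) * q ^ #F ≤ p ^ (#E + 1) * q ^ #F :=
          Nat.mul_le_mul_right _ (pow_le_pow_right₀ hp (card_insert_le e E))
      _ = p * (p ^ #E * q ^ #F) := by ring
      _ ≤ N := (Nat.mul_le_mul_left p hle).trans hN

theorem insert_right (h : AdmitsCover p q {t ∈ T | t.2 ≠ e} m) (he : e ≠ 0) (hq : 0 < q)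
    (hN : q * m ≤ N) : AdmitsCover p q T N := by
  obtain ⟨E, F, hE, hF, hT, hle⟩ := h
  refine ⟨E, insert e F, hE, by simp [hF, he.symm], fun t ht => ?_, ?_⟩
  · have := hT t
    grind
  · calc p ^ #E * q ^ #(insert e F) ≤ p ^ #E * q ^ (#F + 1) :=
          Nat.mul_le_mul_left _ (pow_le_pow_right₀ hq (card_insert_le e F))
      _ = q * (p ^ #E * q ^ #F) := by ring
      _ ≤ N := (Nat.mul_le_mul_left q hle).trans hN

theorem of_triple (hT : ∀ r ∈ T, r = t ∨ r = s ∨ r = u) (ht₁ : t.1 ≠ 0) (ht₂ : t.2 ≠ 0)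
    (hs : s.1 ≠ 0) (hu : u.2 ≠ 0) (hp : 0 < p) (hq : 0 < q) (hN : p * q * min p q ≤ N) :
    AdmitsCover p q T N := by
  rcases min_choice p q with hmin | hmin <;> rw [hmin] at hN
  · refine ⟨{t.1, s.1}, {u.2}, by grind, by grind, by grind, ?_⟩
    calc p ^ #{t.1, s.1} * q ^ #{u.2} ≤ p ^ 2 * q ^ 1 :=
          Nat.mul_le_mul_right _ (pow_le_pow_right₀ hp card_le_two)
      _ = p * q * p := by ring
      _ ≤ N := hN
  · refine ⟨{s.1}, {t.2, u.2}, by grind, by grind, by grind, ?_⟩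
    calc p ^ #{s.1} * q ^ #{t.2, u.2} ≤ p ^ 1 * q ^ 2 :=
          Nat.mul_le_mul_left _ (pow_le_pow_right₀ hq card_le_two)
      _ = p * q * q := by ring
      _ ≤ N := hN

theorem of_isUniformLevel (hp : 0 < p) (hq : 0 < q) (hpq : p.Coprime q) (hA : A.Nonempty)
    (hE : ∀ e ∈ E, IsUniformLevel A p e) (hF : ∀ e ∈ F, IsUniformLevel A q e)
    (hT : ∀ t ∈ T, t.1 ∈ E ∨ t.2 ∈ F) : AdmitsCover p q T #A :=
  ⟨E, F, fun h => (hE 0 h).ne_zero hA rfl, fun h => (hF 0 h).ne_zero hA rfl, hT,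
    Nat.le_of_dvd hA.card_pos (pow_card_mul_pow_card_dvd_card hp hq hpq hE hF)⟩

end AdmitsCover

/-- In the application `s₁ = s₂` may happen, and then `u` is a pair different from both. -/
theorem exists_third_pair (hcard : #T ≤ 3) (ht : t ∈ T) {s₁ s₂ : ℕ × ℕ} (hs₁ : s₁ ∈ T)
    (hs₂ : s₂ ∈ T) (hts₁ : t ≠ s₁) (hts₂ : t ≠ s₂) (hmin : ∀ t ∈ T, s₂.2 ≤ t.2) (hpos : s₁.2 ≠ 0) :
    ∃ u : ℕ × ℕ, u.2 ≠ 0 ∧ ∀ r ∈ T, r = t ∨ r = s₂ ∨ r = u := by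
  obtain ⟨x, hx⟩ : ∃ x, T \ {t, s₂} ⊆ {x} := by
    rw [← card_le_one_iff_subset_singleton, card_sdiff_of_subset (by grind), card_pair hts₂]
    lia
  have hTx (r) (hr : r ∈ T) : r = t ∨ r = s₂ ∨ r = x := by
    simpa [or_iff_not_imp_left, hr] using @hx r
  rcases eq_or_ne x.2 0 with hx0 | hx0
  · exact ⟨s₁, hpos, fun r hr => by grind⟩
  · exact ⟨x, hx0, hTx⟩

/-- If the levels of smallest exponents `s₁.1` and `s₂.2` are not full, then every pair in `T` which
shares its first entry with `s₁` or its second entry with `s₂` forces uniformity in one direction.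
-/
theorem admitsCover_of_not_hasFullLevel (hp : 0 < p) (hq : 0 < q) (hpq : p.Coprime q)
    (hA : A.Nonempty) (hcard : #T ≤ 3) (hT : ∀ t ∈ T, IsBalancedLevel A p q t.1 t.2)
    {s₁ s₂ : ℕ × ℕ} (hs₁ : s₁ ∈ T) (hs₂ : s₂ ∈ T) (hmin₁ : ∀ t ∈ T, s₁.1 ≤ t.1)
    (hmin₂ : ∀ t ∈ T, s₂.2 ≤ t.2) (hfull₁ : ¬ HasFullLevel A p s₁.1)
    (hfull₂ : ¬ HasFullLevel A q s₂.2) : AdmitsCover p q T #A := by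
  have hleft (t) (ht : t ∈ T) (h : t.2 = s₂.2) : IsUniformLevel A p t.1 :=
    (hT t ht).swap.isUniformLevel_of_not_hasFullLevel hq hA (h ▸ hfull₂)
  have hright (t) (ht : t ∈ T) (h : t.1 = s₁.1) : IsUniformLevel A q t.2 :=
    (hT t ht).isUniformLevel_of_not_hasFullLevel hp hA (h ▸ hfull₁)
  by_cases hcover : ∀ t ∈ T, (t.1, s₂.2) ∈ T ∨ (s₁.1, t.2) ∈ T
  · refine .of_isUniformLevel (E := {t ∈ T | t.2 = s₂.2}.image Prod.fst)
      (F := {t ∈ T | t.1 = s₁.1}.image Prod.snd) hp hq hpq hA ?_ ?_ ?_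
    · simpa only [forall_mem_image, mem_filter, and_imp] using hleft
    · simpa only [forall_mem_image, mem_filter, and_imp] using hright
    · simpa using hcover
  obtain ⟨t, ht, ht₁, ht₂⟩ : ∃ t ∈ T, (t.1, s₂.2) ∉ T ∧ (s₁.1, t.2) ∉ T := by
    simpa only [not_forall, not_or, exists_prop] using hcover
  have hs₂pos : s₂.1 ≠ 0 := (hleft s₂ hs₂ rfl).ne_zero hA
  have hs₁pos : s₁.2 ≠ 0 := (hright s₁ hs₁ rfl).ne_zero hA
  have ht₁pos : t.1 ≠ 0 := by grind
  have ht₂pos : t.2 ≠ 0 := by grind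
  obtain ⟨u, hu, hTu⟩ : ∃ u : ℕ × ℕ, u.2 ≠ 0 ∧ ∀ r ∈ T, r = t ∨ r = s₂ ∨ r = u :=
    exists_third_pair hcard ht hs₁ hs₂ (by grind) (by grind) hmin₂ hs₁pos
  exact .of_triple hTu ht₁pos ht₂pos hs₂pos hu hp hq
    ((hT t ht).mul_min_le_card hp hq hpq hA (hleft s₂ hs₂ rfl) (hright s₁ hs₁ rfl) ht₁pos ht₂pos
      (by grind) (by grind))

theorem admitsCover_card (hp : 0 < p) (hq : 0 < q) (hpq : p.Coprime q) (hA : A.Nonempty)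
    (hcard : #T ≤ 3) (hT : ∀ t ∈ T, IsBalancedLevel A p q t.1 t.2) : AdmitsCover p q T #A := by
  induction T using Finset.strongInduction generalizing A with | H T ih =>
  rcases T.eq_empty_or_nonempty with rfl | hTne
  · exact ⟨∅, ∅, by simpa using hA.card_pos⟩
  obtain ⟨s₁, hs₁, hmin₁⟩ := exists_min_image T Prod.fst hTne
  obtain ⟨s₂, hs₂, hmin₂⟩ := exists_min_image T Prod.snd hTne
  by_cases hfull₁ : HasFullLevel A p s₁.1
  · obtain ⟨r, hr, hle⟩ := hfull₁.exists_residueSlice hp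
    have hlt (t) (ht : t ∈ {t ∈ T | t.1 ≠ s₁.1}) : s₁.1 < t.1 := by grind
    refine .insert_left (ih {t ∈ T | t.1 ≠ s₁.1} ?_ hr ?_ fun t ht => ?_) hfull₁.ne_zero hp hle
    · exact filter_ssubset.mpr ⟨s₁, hs₁, by simp⟩
    · exact (card_filter_le ..).trans hcard
    · exact (hT t (mem_of_mem_filter t ht)).residueSlice_of_lt (hlt t ht) r
  by_cases hfull₂ : HasFullLevel A q s₂.2
  · obtain ⟨r, hr, hle⟩ := hfull₂.exists_residueSlice hq
    have hlt (t) (ht : t ∈ {t ∈ T | t.2 ≠ s₂.2}) : s₂.2 < t.2 := by grind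
    refine .insert_right (ih {t ∈ T | t.2 ≠ s₂.2} ?_ hr ?_ fun t ht => ?_) hfull₂.ne_zero hq hle
    · exact filter_ssubset.mpr ⟨s₂, hs₂, by simp⟩
    · exact (card_filter_le ..).trans hcard
    · exact ((hT t (mem_of_mem_filter t ht)).swap.residueSlice_of_lt (hlt t ht) r).swap
  exact admitsCover_of_not_hasFullLevel hp hq hpq hA hcard hT hs₁ hs₂ hmin₁ hmin₂ hfull₁ hfull₂

/-! ### Cyclotomic divisors of the mask polynomial -/

variable {k l z : ℕ}

section ResidueCoeff

variable {R : Type*} [CommRing R] {s : ℕ} {P : R[X]}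

/-- The sum of the coefficients of a polynomial at the exponents congruent to `z` modulo `s`, that
is, the coefficient of `X ^ z` in the reduction modulo `X ^ s - 1`. -/
noncomputable def residueCoeff (s z : ℕ) : R[X] →ₗ[R] R :=
  lsum fun n => if n ≡ z [MOD s] then LinearMap.id else 0

theorem residueCoeff_monomial (s z n : ℕ) (r : R) :
    residueCoeff s z (monomial n r) = if n ≡ z [MOD s] then r else 0 := by
  by_cases h : n ≡ z [MOD s] <;> simp [residueCoeff, h, Polynomial.sum_monomial_index]

theorem residueCoeff_add_self (s z : ℕ) (P : R[X]) :
    residueCoeff s (z + s) P = residueCoeff s z P := by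
  have h (n : ℕ) : n ≡ z + s [MOD s] ↔ n ≡ z [MOD s] := by simp [Nat.ModEq]
  simp only [residueCoeff, h]

theorem residueCoeff_mul_X_pow (s z k : ℕ) (P : R[X]) :
    residueCoeff s (z + k) (P * X ^ k) = residueCoeff s z P := by
  induction P using Polynomial.induction_on' with
  | add P Q hP hQ => rw [add_mul, map_add, map_add, hP, hQ]
  | monomial n r =>
    simp only [monomial_mul_X_pow, residueCoeff_monomial, Nat.ModEq.add_iff_right rfl]

theorem residueCoeff_eq_zero_of_dvd (h : X ^ s - 1 ∣ P) : residueCoeff s z P = 0 := by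
  obtain ⟨Q, rfl⟩ := h
  rw [mul_comm, mul_sub, mul_one, map_sub, ← residueCoeff_add_self, residueCoeff_mul_X_pow,
    sub_self]

theorem residueCoeff_maskPoly : residueCoeff s z (maskPoly A) = #(residueSlice A s z) := by
  simp only [maskPoly, map_sum, X_pow_eq_monomial, residueCoeff_monomial, sum_boole, residueSlice]

end ResidueCoeff

theorem card_residueSlice_add_of_dvd (h : (X ^ m - 1 : ℤ[X]) ∣ maskPoly A * (X ^ k - 1)) (z : ℕ) :
    #(residueSlice A m (z + k)) = #(residueSlice A m z) := by
  have := residueCoeff_eq_zero_of_dvd (z := z + k) h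
  rw [mul_sub, mul_one, map_sub, residueCoeff_mul_X_pow, residueCoeff_maskPoly,
    residueCoeff_maskPoly] at this
  lia

theorem card_residueSlice_add_add_of_dvd
    (h : (X ^ m - 1 : ℤ[X]) ∣ maskPoly A * (X ^ k - 1) * (X ^ l - 1)) (z : ℕ) :
    #(residueSlice A m z) + #(residueSlice A m (z + k + l)) =
      #(residueSlice A m (z + k)) + #(residueSlice A m (z + l)) := by
  have := residueCoeff_eq_zero_of_dvd (z := z + k + l) h
  rw [mul_sub, mul_one, map_sub, residueCoeff_mul_X_pow, mul_sub, mul_one, map_sub, map_sub,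
    residueCoeff_mul_X_pow, add_right_comm z k l, residueCoeff_mul_X_pow] at this
  simp only [residueCoeff_maskPoly] at this
  rw [add_right_comm]
  lia

theorem exists_add_modEq (h : x ≡ x' [MOD M]) (hM : 0 < M) (hp : 0 < p) :
    ∃ k, M ∣ k ∧ x + k ≡ x' [MOD M * p] := by
  obtain ⟨w, hw⟩ := Nat.exists_eq_add_of_le (Nat.le_mul_of_pos_left x (Nat.mul_pos hM hp))
  have hx : x + (w + x') ≡ x' [MOD M * p] := by
    rw [← add_assoc, ← hw]
    simp [Nat.ModEq]
  have hk : x + (w + x') ≡ x + 0 [MOD M] := hx.of_mul_right p |>.trans h.symm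
  exact ⟨w + x', (Nat.modEq_zero_iff_dvd).mp hk.add_left_cancel', hx⟩

theorem isUniform_of_dvd (hM : 0 < M) (hp : 0 < p)
    (h : (X ^ (M * p) - 1 : ℤ[X]) ∣ maskPoly A * (X ^ M - 1)) : IsUniform A M p := by
  intro x x' hx
  obtain ⟨k, hk, hxk⟩ := exists_add_modEq hx hM hp
  rw [← residueSlice_congr hxk, card_residueSlice_add_of_dvd]
  exact h.trans (mul_dvd_mul_left _ (dvd_pow_sub_one_of_dvd hk))

theorem residueSlice_residueSlice (hmn : m.Coprime n) (hx : z ≡ x [MOD m]) (hy : z ≡ y [MOD n]) :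
    residueSlice (residueSlice A m x) n y = residueSlice A (m * n) z := by
  rw [← residueSlice_congr hx, ← residueSlice_congr hy]
  simp only [residueSlice, filter_filter, Nat.modEq_and_modEq_iff_modEq_mul hmn]

theorem isBalanced_of_dvd (hM : 0 < M) (hp : 0 < p) (hL : 0 < L) (hq : 0 < q)
    (hco : (M * p).Coprime (L * q))
    (h : (X ^ (M * p * (L * q)) - 1 : ℤ[X]) ∣
      maskPoly A * (X ^ (M * (L * q)) - 1) * (X ^ (M * p * L) - 1)) :
    IsBalanced A M p L q := by
  intro x x' y y' hx hy
  obtain ⟨k, hk, hxk⟩ := exists_add_modEq hx hM hp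
  obtain ⟨l, hl, hyl⟩ := exists_add_modEq hy hL hq
  obtain ⟨z, hzx, hzy⟩ := Nat.chineseRemainder hco x y
  obtain ⟨α, hαk, hα₀⟩ := Nat.chineseRemainder hco k 0
  obtain ⟨β, hβ₀, hβl⟩ := Nat.chineseRemainder hco 0 l
  have hα : M * (L * q) ∣ α :=
    (hco.coprime_mul_right).mul_dvd_of_dvd_of_dvd
      ((hαk.of_mul_right p).dvd_iff (dvd_refl M) |>.mpr hk) (Nat.modEq_zero_iff_dvd.mp hα₀)
  have hβ : M * p * L ∣ β :=
    (hco.coprime_mul_right_right).mul_dvd_of_dvd_of_dvd (Nat.modEq_zero_iff_dvd.mp hβ₀)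
      ((hβl.of_mul_right q).dvd_iff (dvd_refl L) |>.mpr hl)
  have hαx : z + α ≡ x' [MOD M * p] := (hzx.add hαk).trans hxk
  have hαy : z + α ≡ y [MOD L * q] := hzy.add hα₀
  have hβx : z + β ≡ x [MOD M * p] := hzx.add hβ₀
  have hβy : z + β ≡ y' [MOD L * q] := (hzy.add hβl).trans hyl
  have hαβx : z + α + β ≡ x' [MOD M * p] := hαx.add hβ₀
  have hαβy : z + α + β ≡ y' [MOD L * q] := (hαy.add hβl).trans hyl
  rw [residueSlice_residueSlice hco hzx hzy, residueSlice_residueSlice hco hαβx hαβy,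
    residueSlice_residueSlice hco hβx hβy, residueSlice_residueSlice hco hαx hαy]
  rw [card_residueSlice_add_add_of_dvd, add_comm]
  exact h.trans (mul_dvd_mul (mul_dvd_mul_left _ (dvd_pow_sub_one_of_dvd hα))
    (dvd_pow_sub_one_of_dvd hβ))

theorem isRelPrime_cyclotomic (hm : 0 < m) (hn : 0 < n) (hmn : m ≠ n) :
    IsRelPrime (cyclotomic m ℤ) (cyclotomic n ℤ) := by
  rw [(cyclotomic.irreducible hm).isRelPrime_iff_not_dvd]
  intro hdvd
  exact hmn <| cyclotomic_injective <| eq_of_monic_of_associated (cyclotomic.monic m ℤ)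
    (cyclotomic.monic n ℤ) <|
    (cyclotomic.irreducible hm).associated_of_dvd (cyclotomic.irreducible hn) hdvd

theorem X_pow_sub_one_dvd_mul {P Q : ℤ[X]} (hn : 0 < n) (hP : cyclotomic n ℤ ∣ P)
    (hQ : ∀ r : ℕ, r.Prime → r ∣ n → X ^ (n / r) - 1 ∣ Q) : X ^ n - 1 ∣ P * Q := by
  rw [← prod_cyclotomic_eq_X_pow_sub_one hn ℤ]
  refine prod_dvd_of_isRelPrime (fun d hd e he hde => isRelPrime_cyclotomic
    (Nat.pos_of_mem_divisors hd) (Nat.pos_of_mem_divisors he) hde) fun d hd => ?_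
  obtain ⟨k, rfl⟩ := Nat.dvd_of_mem_divisors hd
  obtain rfl | hk := eq_or_ne k 1
  · simpa using hP.mul_right Q
  obtain ⟨r, hr, l, rfl⟩ := Nat.exists_prime_and_dvd hk
  have hdvd : d ∣ d * (r * l) / r := by
    rw [mul_left_comm, Nat.mul_div_cancel_left _ hr.pos]
    exact dvd_mul_right d l
  exact ((cyclotomic.dvd_X_pow_sub_one d ℤ).trans (dvd_pow_sub_one_of_dvd hdvd)).trans
    (hQ r hr ((dvd_mul_right r l).mul_left d)) |>.mul_left P

theorem eq_empty_of_cyclotomic_one_dvd (h : cyclotomic 1 ℤ ∣ maskPoly A) : A = ∅ := by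
  rw [cyclotomic_one, ← C_1, dvd_iff_isRoot, IsRoot.def] at h
  simpa [maskPoly, eval_finsetSum] using h

theorem isUniformLevel_of_cyclotomic_dvd (hp : p.Prime) :
    ∀ {e : ℕ}, cyclotomic (p ^ e) ℤ ∣ maskPoly A → IsUniformLevel A p e
  | 0, h => eq_empty_of_cyclotomic_one_dvd (by simpa using h)
  | e + 1, h => by
    rw [isUniformLevel_succ]
    refine isUniform_of_dvd (pow_pos hp.pos e) hp.pos ?_
    rw [← pow_succ]
    refine X_pow_sub_one_dvd_mul (pow_pos hp.pos _) h fun r hr hrp => ?_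
    rw [(Nat.prime_dvd_prime_iff_eq hr hp).mp (hr.dvd_of_dvd_pow hrp), pow_succ,
      Nat.mul_div_cancel _ hp.pos]

theorem isBalancedLevel_of_cyclotomic_dvd (hp : p.Prime) (hq : q.Prime) (hpq : p ≠ q) :
    ∀ {a b : ℕ}, cyclotomic (p ^ a * q ^ b) ℤ ∣ maskPoly A → IsBalancedLevel A p q a b
  | 0, b, h => isUniformLevel_of_cyclotomic_dvd hq (by simpa using h)
  | a + 1, 0, h => isUniformLevel_of_cyclotomic_dvd (e := a + 1) hp (by simpa using h)
  | a + 1, b + 1, h => by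
    have hpa := pow_pos hp.pos a
    have hqb := pow_pos hq.pos b
    have hco : (p ^ (a + 1)).Coprime (q ^ (b + 1)) :=
      ((Nat.coprime_primes hp hq).mpr hpq).pow _ _
    rw [pow_succ, pow_succ] at h hco
    refine isBalanced_of_dvd hpa hp.pos hqb hq.pos hco ?_
    rw [mul_assoc (maskPoly A)]
    refine X_pow_sub_one_dvd_mul (by have := hp.pos; have := hq.pos; positivity) h
      fun r hr hrpq => ?_
    rcases hr.dvd_mul.mp hrpq with hrp | hrq
    · rw [← pow_succ] at hrp
      rw [(Nat.prime_dvd_prime_iff_eq hr hp).mp (hr.dvd_of_dvd_pow hrp), mul_right_comm,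
        Nat.mul_div_cancel _ hp.pos]
      exact dvd_mul_right ..
    · rw [← pow_succ] at hrq
      rw [(Nat.prime_dvd_prime_iff_eq hr hq).mp (hr.dvd_of_dvd_pow hrq), ← mul_assoc,
        Nat.mul_div_cancel _ hq.pos]
      exact dvd_mul_left ..

/-! ### Fibered sets -/

theorem cyclotomic_dvd_expand (h : n.Coprime m) : cyclotomic n ℤ ∣ expand ℤ m (cyclotomic n ℤ) := by
  induction m using induction_on_primes with
  | zero => simp [Nat.coprime_zero_right n |>.mp h]
  | one => simp
  | prime_mul r m hr ih =>
    have hrn : ¬r ∣ n := hr.coprime_iff_not_dvd.mp h.coprime_mul_right_right.symm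
    rw [expand_mul]
    refine Dvd.dvd.trans ?_ (_root_.map_dvd (expand ℤ r) (ih h.coprime_mul_left_right))
    rw [cyclotomic_expand_eq_cyclotomic_mul hr hrn]
    exact dvd_mul_left ..

theorem fiberPoly_eq_expand (N : ℕ) (hp : p.Prime) :
    fiberPoly N p = expand ℤ (N / p) (cyclotomic p ℤ) := by
  have := Fact.mk hp
  simp [fiberPoly, cyclotomic_prime, ← pow_mul, mul_comm]

theorem fiberPoly_dvd_fiberPoly_mul (hp : p.Prime) (hpN : p ∣ N) (hpm : p.Coprime m) :
    fiberPoly N p ∣ fiberPoly (N * m) p := by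
  rw [fiberPoly_eq_expand _ hp, fiberPoly_eq_expand _ hp, Nat.mul_div_right_comm hpN, expand_mul]
  exact _root_.map_dvd (expand ℤ (N / p)) (cyclotomic_dvd_expand hpm)

theorem fiberPoly_mul_X_pow_sub_one (h : p ∣ N) :
    fiberPoly N p * (X ^ (N / p) - 1) = X ^ N - 1 := by
  simp only [fiberPoly, mul_comm _ (N / p), pow_mul]
  rw [geom_sum_mul, ← pow_mul, Nat.div_mul_cancel h]

theorem IsFibered.cyclotomic_dvd (h : IsFibered A N) (hN : 0 < N) :
    cyclotomic N ℤ ∣ maskPoly A := by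
  obtain ⟨p, hp, hpN, hdvd⟩ := h
  have hdiv : N / p ∈ N.properDivisors :=
    Nat.mem_properDivisors.mpr ⟨Nat.div_dvd_of_dvd hpN, Nat.div_lt_self hN hp.one_lt⟩
  have hmul := X_pow_sub_one_mul_cyclotomic_dvd_X_pow_sub_one_of_dvd ℤ hdiv
  rw [← fiberPoly_mul_X_pow_sub_one hpN, mul_comm] at hmul
  have hne : (X ^ (N / p) - 1 : ℤ[X]) ≠ 0 := by
    simpa using X_pow_sub_C_ne_zero (Nat.div_pos (Nat.le_of_dvd hN hpN) hp.pos) (1 : ℤ)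
  exact ((mul_dvd_mul_iff_right hne).mp hmul).trans hdvd

theorem isFibered_range (hm : m ≠ 1) (hmN : m ∣ N) : IsFibered (range N) m := by
  obtain ⟨p, hp, hpm⟩ := Nat.exists_prime_and_dvd hm
  refine ⟨p, hp, hpm, ?_⟩
  rw [← mul_dvd_mul_iff_right (X_sub_C_ne_zero (1 : ℤ)), C_1, maskPoly, geom_sum_mul]
  refine (mul_dvd_mul_left _ (sub_one_dvd_pow_sub_one X (m / p))).trans ?_
  rw [fiberPoly_mul_X_pow_sub_one hpm]
  exact dvd_pow_sub_one_of_dvd hmN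

theorem exists_maskPoly_eq_mul_fiberPoly (hp : 0 < p) (hA : ∀ n ∈ A, n < m) :
    ∃ B : Finset ℕ, #B = #A * p ∧ maskPoly B = maskPoly A * fiberPoly (m * p) p := by
  have hinj : Set.InjOn (fun x : ℕ × ℕ => x.1 + x.2 * m) (A ×ˢ range p : Finset (ℕ × ℕ)) := by
    rintro ⟨n, i⟩ hn ⟨n', i'⟩ hn' h
    have hn := hA n (mem_product.mp hn).1
    have hn' := hA n' (mem_product.mp hn').1
    have hm : 0 < m := by lia
    have hmod := congr_arg (· % m) h
    have hdiv := congr_arg (· / m) h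
    simp only [Nat.add_mul_mod_self_right, Nat.mod_eq_of_lt, hn, hn'] at hmod
    simp only [Nat.add_mul_div_right _ _ hm, Nat.div_eq_of_lt, hn, hn', zero_add] at hdiv
    rw [hmod, hdiv]
  refine ⟨(A ×ˢ range p).image fun x => x.1 + x.2 * m, ?_, ?_⟩
  · rw [card_image_of_injOn hinj, card_product, card_range]
  · simp only [maskPoly, fiberPoly, sum_image hinj, sum_product, sum_mul_sum, pow_add,
      Nat.mul_div_cancel m hp]

theorem exists_fiberPoly_succ_dvd (hp : p.Prime) (A : Finset ℕ) (e : ℕ) (hm : 0 < m)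
    (hpm : p.Coprime m) : ∃ B : Finset ℕ, #B = #A * p ∧ maskPoly A ∣ maskPoly B ∧
      ∀ n, n ∣ m → fiberPoly (p ^ (e + 1) * n) p ∣ maskPoly B := by
  -- Multiplying the scale by a large `k` prime to `p` makes the translates of `A` disjoint.
  obtain ⟨k, hpk, hk⟩ : ∃ k, p.Coprime k ∧ ∀ n ∈ A, n < k :=
    ⟨p * A.sup id + 1, by simp, fun n hn => Nat.lt_succ_of_le <|
      (le_sup (f := id) hn).trans (Nat.le_mul_of_pos_left _ hp.pos)⟩
  have hlt : ∀ n ∈ A, n < p ^ e * m * k := fun n hn =>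
    (hk n hn).trans_le <| Nat.le_mul_of_pos_left k (Nat.mul_pos (pow_pos hp.pos e) hm)
  obtain ⟨B, hcard, hB⟩ := exists_maskPoly_eq_mul_fiberPoly hp.pos hlt
  refine ⟨B, hcard, hB ▸ dvd_mul_right .., ?_⟩
  rintro n ⟨l, rfl⟩
  have hscale : p ^ e * (n * l) * k * p = p ^ (e + 1) * n * (l * k) := by ring
  rw [hB, hscale]
  exact (fiberPoly_dvd_fiberPoly_mul hp ((dvd_pow_self p e.succ_ne_zero).mul_right n)
    (hpm.coprime_mul_left_right.mul_right hpk)).mul_left _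

theorem exists_fiberPoly_dvd (hp : p.Prime) (A : Finset ℕ) (hm : 0 < m) (hpm : p.Coprime m)
    (hE : 0 ∉ E) : ∃ B : Finset ℕ, #B = #A * p ^ #E ∧ maskPoly A ∣ maskPoly B ∧
      ∀ e ∈ E, ∀ n, n ∣ m → fiberPoly (p ^ e * n) p ∣ maskPoly B := by
  induction E using Finset.induction_on with
  | empty => exact ⟨A, by simp⟩
  | insert e E he ih =>
    rw [mem_insert, not_or] at hE
    obtain ⟨B, hBcard, hAB, hBE⟩ := ih hE.2
    obtain ⟨e, rfl⟩ := Nat.exists_eq_succ_of_ne_zero (Ne.symm hE.1)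
    obtain ⟨C, hCcard, hBC, hCe⟩ := exists_fiberPoly_succ_dvd hp B e hm hpm
    refine ⟨C, ?_, hAB.trans hBC, ?_⟩
    · rw [hCcard, hBcard, card_insert_of_notMem he, pow_succ, mul_assoc]
    · exact forall_mem_insert _ _ _ |>.mpr ⟨hCe, fun e he n hn => (hBE e he n hn).trans hBC⟩

theorem AdmitsCover.exists_isFibered (h : AdmitsCover p q T N) (hp : p.Prime) (hq : q.Prime)
    (hpq : p ≠ q) :
    ∃ B : Finset ℕ, B.Nonempty ∧ #B ≤ N ∧ ∀ t ∈ T, IsFibered B (p ^ t.1 * q ^ t.2) := by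
  obtain ⟨E, F, hE, hF, hcover, hN⟩ := h
  have hco := (Nat.coprime_primes hp hq).mpr hpq
  obtain ⟨B, hBcard, -, hB⟩ := exists_fiberPoly_dvd hp {0}
    (pow_pos hq.pos (T.sup Prod.snd)) (hco.pow_right _) hE
  obtain ⟨C, hCcard, hBC, hC⟩ := exists_fiberPoly_dvd hq B
    (pow_pos hp.pos (T.sup Prod.fst)) (hco.symm.pow_right _) hF
  rw [hBcard, card_singleton, one_mul] at hCcard
  refine ⟨C, ?_, hCcard.trans_le hN, fun t ht => ?_⟩
  · rw [← card_pos, hCcard]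
    exact Nat.mul_pos (pow_pos hp.pos _) (pow_pos hq.pos _)
  rcases hcover t ht with hE' | hF'
  · refine ⟨p, hp, (dvd_pow_self p ?_).mul_right _, ?_⟩
    · exact ne_of_mem_of_not_mem hE' hE
    · exact (hB _ hE' _ (pow_dvd_pow q (le_sup (f := Prod.snd) ht))).trans hBC
  · refine ⟨q, hq, (dvd_pow_self q ?_).mul_left _, ?_⟩
    · exact ne_of_mem_of_not_mem hF' hF
    · rw [mul_comm]
      exact hC _ hF' _ (pow_dvd_pow p (le_sup (f := Prod.fst) ht))

/-! ### The two minima -/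

variable {S : Finset ℕ}

theorem lcm_id_ne_zero (hS : ∀ s ∈ S, 2 ≤ s) : S.lcm id ≠ 0 := by
  rw [Ne, Finset.lcm_eq_zero_iff]
  rintro ⟨s, hs, rfl⟩
  exact absurd (hS _ hs) (by simp)

theorem exists_eq_image_pow_mul_pow (hS : ∀ s ∈ S, 2 ≤ s)
    (hcard : #(S.lcm id).primeFactors ≤ 2) :
    ∃ p q : ℕ, p.Prime ∧ q.Prime ∧ p ≠ q ∧
      ∃ T : Finset (ℕ × ℕ), #T ≤ #S ∧ S = T.image fun t => p ^ t.1 * q ^ t.2 := by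
  obtain ⟨P, hlcm, hP, hPcard⟩ := Nat.infinite_setOfPred_prime.exists_superset_ncard_eq
    (fun r hr => Nat.prime_of_mem_primeFactors (mem_coe.mp hr))
    (finite_toSet (S.lcm id).primeFactors) (by simpa using hcard)
  obtain ⟨p, q, hpq, rfl⟩ := Set.ncard_eq_two.mp hPcard
  have hp : p.Prime := hP (by simp)
  have hq : q.Prime := hP (by simp)
  have hfactors (s : ℕ) (hs : s ∈ S) : s.primeFactors ⊆ {p, q} := fun r hr => by
    simpa using hlcm (Nat.primeFactors_mono (dvd_lcm (f := id) hs) (lcm_id_ne_zero hS) hr)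
  have hprod (s : ℕ) (hs : s ∈ S) : p ^ s.factorization p * q ^ s.factorization q = s := by
    conv_rhs => rw [← Nat.prod_factorization_pow_eq_self (n := s) (by have := hS s hs; lia)]
    rw [Finsupp.prod_of_support_subset _ (hfactors s hs) _ (by simp), prod_pair hpq]
  refine ⟨p, q, hp, hq, hpq, S.image fun s => (s.factorization p, s.factorization q),
    card_image_le, ?_⟩
  rw [image_image]
  exact (image_id.symm.trans (image_congr fun s hs => (hprod s hs).symm) :)

theorem MINs_le_card (hA : A.Nonempty) (h : ∀ s ∈ S, cyclotomic s ℤ ∣ maskPoly A) :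
    MINs S ≤ #A :=
  Nat.sInf_le ⟨A, hA, rfl, h⟩

theorem FIBs_le_card (hA : A.Nonempty) (h : ∀ s ∈ S, IsFibered A s) : FIBs S ≤ #A :=
  Nat.sInf_le ⟨A, hA, rfl, h⟩

theorem exists_card_eq_FIBs (hS : ∀ s ∈ S, 2 ≤ s) :
    ∃ A : Finset ℕ, A.Nonempty ∧ #A = FIBs S ∧ ∀ s ∈ S, IsFibered A s :=
  Nat.sInf_mem (s := {k | ∃ A : Finset ℕ, A.Nonempty ∧ #A = k ∧ ∀ s ∈ S, IsFibered A s})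
    ⟨_, range (S.lcm id), by simpa using lcm_id_ne_zero hS, rfl, fun s hs =>
      isFibered_range (by have := hS s hs; lia) (dvd_lcm (f := id) hs)⟩

theorem exists_card_le_FIBs (hS : ∀ s ∈ S, 2 ≤ s) :
    ∃ A : Finset ℕ, A.Nonempty ∧ #A ≤ FIBs S ∧ ∀ s ∈ S, cyclotomic s ℤ ∣ maskPoly A := by
  obtain ⟨A, hA, hcard, hfib⟩ := exists_card_eq_FIBs hS
  exact ⟨A, hA, hcard.le, fun s hs =>
    (hfib s hs).cyclotomic_dvd (Nat.zero_lt_two.trans_le (hS s hs))⟩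

theorem MINs_le_FIBs (hS : ∀ s ∈ S, 2 ≤ s) : MINs S ≤ FIBs S := by
  obtain ⟨A, hA, hcard, hdvd⟩ := exists_card_le_FIBs hS
  exact (MINs_le_card hA hdvd).trans hcard

theorem exists_card_eq_MINs (hS : ∀ s ∈ S, 2 ≤ s) :
    ∃ A : Finset ℕ, A.Nonempty ∧ #A = MINs S ∧ ∀ s ∈ S, cyclotomic s ℤ ∣ maskPoly A := by
  obtain ⟨A, hA, -, hdvd⟩ := exists_card_le_FIBs hS
  exact Nat.sInf_mem
    (s := {k | ∃ A : Finset ℕ, A.Nonempty ∧ #A = k ∧ ∀ s ∈ S, cyclotomic s ℤ ∣ maskPoly A})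
    ⟨_, A, hA, rfl, hdvd⟩

end

/-- Theorem 1.3: if `1 ≤ |S| ≤ 3` and `lcm(S)` has at most two distinct prime factors,
then `MIN(S) = FIB(S)`. -/
theorem min_eq_fib_of_card_le_three (S : Finset ℕ) (hS : S.Nonempty)
    (h2 : ∀ s ∈ S, 2 ≤ s) (hcard : S.card ≤ 3)
    (hlcm : (S.lcm id).primeFactors.card ≤ 2) :
    MINs S = FIBs S := by
  refine (MINs_le_FIBs h2).antisymm ?_
  obtain ⟨A, hA, hAcard, hdvd⟩ := exists_card_eq_MINs h2
  obtain ⟨p, q, hp, hq, hpq, T, hTS, rfl⟩ := exists_eq_image_pow_mul_pow h2 hlcm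
  rw [Finset.forall_mem_image] at hdvd
  have hcover : AdmitsCover p q T A.card :=
    admitsCover_card hp.pos hq.pos ((Nat.coprime_primes hp hq).mpr hpq) hA (hTS.trans hcard)
      fun t ht => isBalancedLevel_of_cyclotomic_dvd hp hq hpq (hdvd ht)
  obtain ⟨B, hB, hBcard, hfib⟩ := hcover.exists_isFibered hp hq hpq
  calc FIBs _ ≤ B.card := FIBs_le_card hB (Finset.forall_mem_image.mpr hfib)
    _ ≤ A.card := hBcard
    _ = MINs _ := hAcard
end

section
/- There exist a natural number M with exactly two distinct prime divisors and a nonempty set A ⊆ ℤ_M such that A satisfies (T1) and A(X) has at least one unsupported cyclotomic divisor, i.e. there is an integer s ≥ 2 with Φ_s(X) ∣ A(X), every prime dividing s divides |A|, and Φ_{p^α}(X) ∤ A(X) for every prime power p^α (α ≥ 1) exactly dividing s. -/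
open Polynomial

/-- Mask polynomial of a finite subset of `ZMod M`: `A(X) = ∑_{a ∈ A} X^{a.val}`. -/
noncomputable def zmaskPoly (M : ℕ) (A : Finset (ZMod M)) : Polynomial ℤ :=
  ∑ a ∈ A, X ^ a.val

/-- `S_A^*`: the set of prime powers `p^α` (`α ≥ 1`) with `Φ_{p^α}(X) ∣ A(X)`. -/
def SAstar (M : ℕ) (A : Finset (ZMod M)) : Set ℕ :=
  {s | IsPrimePow s ∧ cyclotomic s ℤ ∣ zmaskPoly M A}

/-- Property (T1): `|A| = ∏_{s ∈ S_A^*} Φ_s(1)`. -/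
def PropT1 (M : ℕ) (A : Finset (ZMod M)) : Prop :=
  (A.card : ℤ) = ∏ᶠ s ∈ SAstar M A, (cyclotomic s ℤ).eval 1

/-- `A` has an unsupported cyclotomic divisor: an `s ≥ 2` with `Φ_s ∣ A(X)`, every prime
dividing `s` divides `|A|`, and `Φ_{p^α} ∤ A(X)` for every prime power `p^α ∥ s`. -/
def HasUnsupportedDivisor (M : ℕ) (A : Finset (ZMod M)) : Prop :=
  ∃ s : ℕ, 2 ≤ s ∧ cyclotomic s ℤ ∣ zmaskPoly M A ∧
    (∀ p : ℕ, p.Prime → p ∣ s → p ∣ A.card) ∧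
    (∀ p α : ℕ, p.Prime → 1 ≤ α → p ^ α ∣ s → ¬ p ^ (α + 1) ∣ s →
      ¬ cyclotomic (p ^ α) ℤ ∣ zmaskPoly M A)

/-!
For distinct primes `p` and `q`, let `A ⊆ ℤ_M` with `M = p ^ (a + 1) * q ^ (b + 1)` be a union of
`p * q` arithmetic progressions of step `p * q`, one in each residue class `(i, j)` modulo
`(p, q)`. The starting points can be prescribed separately modulo `p ^ (a + 1)` and modulo
`q ^ (b + 1)`. Choose them so that modulo `p ^ (a + 1)` the progressions of a row `{i} × ℤ_q` follow
one another as pieces of one long progression, and likewise for the columns modulo `q ^ (b + 1)`.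
If `p ^ a` divides the total length of every row, each row is then equidistributed modulo
`p ^ (a + 1)` within its residue class modulo `p`, so that `Φ_{p ^ k} ∣ A(X)` for
`2 ≤ k ≤ a + 1`; the columns give `Φ_{q ^ k} ∣ A(X)` for `2 ≤ k ≤ b + 1`. When
`|A| = p ^ a * q ^ b`, evaluation at `1` shows that there are no other prime power divisors, which
is (T1).

For `s = p * q` only the lengths matter, and `Φ_{p * q} ∣ A(X)` as soon as the length in class
`(i, j)` has the form `u i + v j`. Such lengths with the right row, column and overall totals exist
for `a = q` and `b = p` by Fermat's little theorem, and `p * q` is unsupported since neither `Φ_p`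
nor `Φ_q` divides `A(X)`.
-/

section

open Finset

theorem sum_range_sum_range_eq_sum_range {R : Type*} [AddCommMonoid R] (f : ℕ → R) (l : ℕ → ℕ)
    (n : ℕ) :
    ∑ j ∈ range n, ∑ t ∈ range (l j), f (∑ k ∈ range j, l k + t) =
      ∑ t ∈ range (∑ j ∈ range n, l j), f t := by
  induction n with
  | zero => simp
  | succ n ih => rw [sum_range_succ, ih, sum_range_succ l, sum_range_add]

theorem geom_sum_eq_zero_of_pow_eq_one {R : Type*} [CommRing R] [NoZeroDivisors R] {x : R} {n : ℕ}
    (hx : x ≠ 1) (hn : x ^ n = 1) : ∑ t ∈ range n, x ^ t = 0 := by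
  have h : (x - 1) * ∑ t ∈ range n, x ^ t = 0 := by rw [mul_geom_sum, hn, sub_self]
  exact (mul_eq_zero.1 h).resolve_left (sub_ne_zero.2 hx)

/-- Modulo `P`, the `n` progressions are consecutive pieces of a single one, of length
`∑ j, l j`. -/
theorem sum_pow_consecutive_progressions_eq_zero {R : Type*} [CommRing R] [NoZeroDivisors R]
    {ζ : R} {d P x n : ℕ} {l s : ℕ → ℕ} (hP : ζ ^ P = 1) (hd : ζ ^ d ≠ 1)
    (hs : ∀ j < n, s j ≡ x + d * ∑ k ∈ range j, l k [MOD P])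
    (hl : P ∣ d * ∑ j ∈ range n, l j) :
    ∑ j ∈ range n, ∑ t ∈ range (l j), ζ ^ (s j + d * t) = 0 := by
  have hpow : ∀ j ∈ range n, ∀ t,
      ζ ^ (s j + d * t) = ζ ^ x * (ζ ^ d) ^ (∑ k ∈ range j, l k + t) := by
    intro j hj t
    rw [← pow_mul, ← pow_add, mul_add, ← add_assoc]
    exact pow_eq_pow_of_modEq ((hs j (mem_range.1 hj)).add_right _) hP
  have hone : (ζ ^ d) ^ ∑ j ∈ range n, l j = 1 := by
    rw [← pow_mul]
    exact orderOf_dvd_iff_pow_eq_one.1 ((orderOf_dvd_of_pow_eq_one hP).trans hl)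
  calc ∑ j ∈ range n, ∑ t ∈ range (l j), ζ ^ (s j + d * t)
      = ∑ j ∈ range n, ∑ t ∈ range (l j), ζ ^ x * (ζ ^ d) ^ (∑ k ∈ range j, l k + t) :=
        sum_congr rfl fun j hj => sum_congr rfl fun t _ => hpow j hj t
    _ = ζ ^ x * ∑ t ∈ range (∑ j ∈ range n, l j), (ζ ^ d) ^ t := by
        rw [sum_range_sum_range_eq_sum_range (fun t => ζ ^ x * (ζ ^ d) ^ t), mul_sum]
    _ = 0 := by rw [geom_sum_eq_zero_of_pow_eq_one hd hone, mul_zero]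

theorem isPrimitiveRoot_mul_of_coprime {R : Type*} [CommMonoid R] {α β : R} {p q : ℕ}
    (hα : IsPrimitiveRoot α p) (hβ : IsPrimitiveRoot β q) (hpq : p.Coprime q) :
    IsPrimitiveRoot (α * β) (p * q) := by
  have hcop : (orderOf α).Coprime (orderOf β) := by rwa [← hα.eq_orderOf, ← hβ.eq_orderOf]
  rw [IsPrimitiveRoot.iff_orderOf, (Commute.all α β).orderOf_mul_eq_mul_orderOf_of_coprime hcop,
    ← hα.eq_orderOf, ← hβ.eq_orderOf]

theorem sum_add_mul_pow_mul_pow_eq_zero {R : Type*} [CommRing R] [IsDomain R] {α β : R} {p q : ℕ}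
    (hα : IsPrimitiveRoot α p) (hβ : IsPrimitiveRoot β q) (hp : 1 < p) (hq : 1 < q)
    (u v : ℕ → R) :
    ∑ i ∈ range p, ∑ j ∈ range q, (u i + v j) * (α ^ i * β ^ j) = 0 := by
  calc ∑ i ∈ range p, ∑ j ∈ range q, (u i + v j) * (α ^ i * β ^ j)
      = (∑ i ∈ range p, u i * α ^ i) * ∑ j ∈ range q, β ^ j +
          (∑ i ∈ range p, α ^ i) * ∑ j ∈ range q, v j * β ^ j := by
        simp only [sum_mul_sum, ← sum_add_distrib]
        exact sum_congr rfl fun i _ => sum_congr rfl fun j _ => by ring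
    _ = 0 := by rw [hα.geom_sum_eq_zero hp, hβ.geom_sum_eq_zero hq, mul_zero, zero_mul, add_zero]

theorem cyclotomic_dvd_iff_aeval_eq_zero {K : Type*} [Field K] [CharZero K] {ζ : K} {s : ℕ}
    (hζ : IsPrimitiveRoot ζ s) (hs : 0 < s) (f : ℤ[X]) :
    cyclotomic s ℤ ∣ f ↔ aeval ζ f = 0 := by
  rw [cyclotomic_eq_minpoly hζ hs, minpoly.isIntegrallyClosed_dvd_iff (hζ.isIntegral hs)]

theorem prod_cyclotomic_dvd {T : Finset ℕ} {f : ℤ[X]} (hpos : ∀ t ∈ T, 0 < t)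
    (hT : ∀ t ∈ T, cyclotomic t ℤ ∣ f) : ∏ t ∈ T, cyclotomic t ℤ ∣ f := by
  refine prod_dvd_of_isRelPrime (fun a ha b hb hab => ?_) hT
  have ha' := cyclotomic.irreducible (hpos a ha)
  have hb' := cyclotomic.irreducible (hpos b hb)
  refine ha'.isRelPrime_iff_not_dvd.2 fun hdvd => hab (cyclotomic_injective (R := ℤ) ?_)
  exact eq_of_monic_of_associated (cyclotomic.monic a ℤ) (cyclotomic.monic b ℤ)
    (ha'.associated_of_dvd hb' hdvd)

/-- The powers `p ^ 2, …, p ^ (a + 1)`: the part of `S_A^*` coming from `p`, for `A` a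
`progressionGrid` with the right row sums. -/
def higherPowers (p a : ℕ) : Finset ℕ :=
  (range a).image fun k => p ^ (k + 2)

theorem mem_higherPowers {p a t : ℕ} : t ∈ higherPowers p a ↔ ∃ k < a, p ^ (k + 2) = t := by
  simp [higherPowers]

theorem isPrimePow_of_mem_higherPowers {p a t : ℕ} (hp : p.Prime) (ht : t ∈ higherPowers p a) :
    IsPrimePow t := by
  obtain ⟨k, -, rfl⟩ := mem_higherPowers.1 ht
  exact hp.isPrimePow.pow (by lia)

theorem dvd_of_mem_higherPowers {p a t : ℕ} (ht : t ∈ higherPowers p a) : t ∣ p ^ (a + 1) := by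
  obtain ⟨k, hk, rfl⟩ := mem_higherPowers.1 ht
  exact pow_dvd_pow p (by lia)

theorem not_dvd_mul_of_mem_higherPowers {p q a t : ℕ} (hp : p.Prime) (hpq : p.Coprime q)
    (ht : t ∈ higherPowers p a) : ¬ t ∣ p * q := by
  obtain ⟨k, -, rfl⟩ := mem_higherPowers.1 ht
  intro hdvd
  have hsq : p * p ∣ p * q := (Dvd.intro_left (p ^ k) (by ring)).trans hdvd
  exact hp.coprime_iff_not_dvd.1 hpq (Nat.dvd_of_mul_dvd_mul_left hp.pos hsq)

theorem disjoint_higherPowers {p q : ℕ} (hp : p.Prime) (hq : q.Prime) (hpq : p ≠ q) (a b : ℕ) :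
    Disjoint (higherPowers p a) (higherPowers q b) := by
  refine disjoint_left.2 fun t ht ht' => hpq ?_
  obtain ⟨k, -, rfl⟩ := mem_higherPowers.1 ht
  obtain ⟨l, -, hl⟩ := mem_higherPowers.1 ht'
  exact (Nat.prime_dvd_prime_iff_eq hp hq).1
    (hp.dvd_of_dvd_pow (hl ▸ dvd_pow_self p (by lia) : p ∣ q ^ (l + 2)))

theorem prod_eval_one_cyclotomic_higherPowers {p : ℕ} (hp : p.Prime) (a : ℕ) :
    ∏ t ∈ higherPowers p a, (cyclotomic t ℤ).eval 1 = (p : ℤ) ^ a := by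
  have : Fact p.Prime := ⟨hp⟩
  have hinj : Function.Injective fun k => p ^ (k + 2) := fun k l h =>
    Nat.add_right_cancel (Nat.pow_right_injective hp.two_le h)
  rw [higherPowers, prod_image hinj.injOn]
  simp only [eval_one_cyclotomic_prime_pow, prod_const, card_range]

section MaskPolynomial

variable {M : ℕ}

theorem eval_one_zmaskPoly (A : Finset (ZMod M)) : (zmaskPoly M A).eval 1 = A.card := by
  simp [zmaskPoly, eval_finsetSum]

theorem aeval_zmaskPoly_image_natCast {R ι : Type*} [CommRing R] {ζ : R} (hζ : ζ ^ M = 1)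
    {s : Finset ι} {f : ι → ℕ} (hf : Set.InjOn (fun x => (f x : ZMod M)) s) :
    aeval ζ (zmaskPoly M (s.image fun x => (f x : ZMod M))) = ∑ x ∈ s, ζ ^ f x := by
  simp only [zmaskPoly, map_sum, map_pow, aeval_X, sum_image hf, ZMod.val_natCast,
    ← pow_eq_pow_mod _ hζ]

/-- Any further `s ∈ S_A^*` would make `Φ_s(1) * |A|` a divisor of `A(1) = |A|`, although `Φ_s(1)`
is prime. -/
theorem SAstar_eq_of_card_eq_prod {A : Finset (ZMod M)} {T : Finset ℕ} (hA : A.Nonempty)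
    (hT : (T : Set ℕ) ⊆ SAstar M A)
    (hcard : (A.card : ℤ) = ∏ t ∈ T, (cyclotomic t ℤ).eval 1) : SAstar M A = T := by
  refine Set.Subset.antisymm (fun s hs => ?_) hT
  by_contra hsT
  have hmem : ∀ t ∈ insert s T, t ∈ SAstar M A := by
    simpa only [forall_mem_insert] using ⟨hs, fun t ht => hT ht⟩
  have hdvd : (cyclotomic s ℤ).eval 1 * A.card ∣ A.card := by
    have := eval_dvd (x := (1 : ℤ)) <|
      prod_cyclotomic_dvd (fun t ht => (hmem t ht).1.pos) fun t ht => (hmem t ht).2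
    rwa [eval_prod, prod_insert hsT, ← hcard, eval_one_zmaskPoly] at this
  have hunit : (cyclotomic s ℤ).eval 1 ∣ 1 :=
    Int.dvd_of_mul_dvd_mul_right (Int.natCast_ne_zero.2 hA.card_ne_zero) (by rwa [one_mul])
  obtain ⟨r, k, hr, hk, rfl⟩ := (isPrimePow_nat_iff s).1 hs.1
  obtain ⟨k, rfl⟩ := Nat.exists_eq_add_one.2 hk
  have : Fact r.Prime := ⟨hr⟩
  rw [eval_one_cyclotomic_prime_pow] at hunit
  exact hr.one_lt.ne' (Nat.dvd_one.1 (by exact_mod_cast hunit))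

theorem propT1_of_SAstar_eq {A : Finset (ZMod M)} {T : Finset ℕ} (hT : SAstar M A = T)
    (hcard : (A.card : ℤ) = ∏ t ∈ T, (cyclotomic t ℤ).eval 1) : PropT1 M A := by
  rw [PropT1, hT, finprod_mem_coe_finset, hcard]

end MaskPolynomial

section ProgressionGrid

variable {p q : ℕ} (h : p.Coprime q) (a b : ℕ) (len : ℕ → ℕ → ℕ)

/-- A starting point for the block `(i, j)`: modulo `p ^ (a + 1)` it continues with step `p * q`
the progression through the blocks `(i, 0), …, (i, j - 1)` of its row, and modulo `q ^ (b + 1)`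
the one through the blocks `(0, j), …, (i - 1, j)` of its column. -/
def gridStart (i j : ℕ) : ℕ :=
  Nat.chineseRemainder (h.pow (a + 1) (b + 1))
    (i + p * q * ∑ k ∈ range j, len i k) (j + p * q * ∑ k ∈ range i, len k j)

/-- Index set of `progressionGrid`: the `t`-th term of the block `(i, j)` is `⟨(i, j), t⟩`. -/
def gridIndex (p q : ℕ) (len : ℕ → ℕ → ℕ) : Finset (Σ _ : ℕ × ℕ, ℕ) :=
  (range p ×ˢ range q).sigma fun x => range (len x.1 x.2)

/-- The union over `i < p` and `j < q` of progressions with step `p * q` and length `len i j` inside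
the residue class of `i` modulo `p` and `j` modulo `q`, with the starting points `gridStart`. -/
def progressionGrid : Finset (ZMod (p ^ (a + 1) * q ^ (b + 1))) :=
  (gridIndex p q len).image fun x =>
    ((gridStart h a b len x.1.1 x.1.2 + p * q * x.2 : ℕ) : ZMod (p ^ (a + 1) * q ^ (b + 1)))

theorem gridStart_modEq_row (i j : ℕ) :
    gridStart h a b len i j ≡ i + p * q * ∑ k ∈ range j, len i k [MOD p ^ (a + 1)] :=
  (Nat.chineseRemainder _ _ _).2.1

theorem gridStart_modEq_column (i j : ℕ) :
    gridStart h a b len i j ≡ j + p * q * ∑ k ∈ range i, len k j [MOD q ^ (b + 1)] :=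
  (Nat.chineseRemainder _ _ _).2.2

theorem gridStart_add_modEq_left (i j t : ℕ) :
    gridStart h a b len i j + p * q * t ≡ i [MOD p] := by
  have hstart := (gridStart_modEq_row h a b len i j).of_dvd (dvd_pow_self p a.succ_ne_zero)
  simpa [mul_assoc, Nat.ModEq] using hstart.add_right (p * q * t)

theorem gridStart_add_modEq_right (i j t : ℕ) :
    gridStart h a b len i j + p * q * t ≡ j [MOD q] := by
  have hstart := (gridStart_modEq_column h a b len i j).of_dvd (dvd_pow_self q b.succ_ne_zero)
  simpa [mul_assoc, mul_left_comm p q, Nat.ModEq] using hstart.add_right (p * q * t)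

variable {a b len}

theorem injOn_gridIndex (hlen : ∀ i < p, ∀ j < q, len i j ≤ p ^ a * q ^ b) :
    Set.InjOn (fun x : Σ _ : ℕ × ℕ, ℕ =>
      ((gridStart h a b len x.1.1 x.1.2 + p * q * x.2 : ℕ) : ZMod (p ^ (a + 1) * q ^ (b + 1))))
      (gridIndex p q len) := by
  rintro ⟨⟨i, j⟩, t⟩ hx ⟨⟨i', j'⟩, t'⟩ hx' heq
  simp only [gridIndex, mem_coe, mem_sigma, mem_product, mem_range] at hx hx'
  obtain ⟨⟨hi, hj⟩, ht⟩ := hx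
  obtain ⟨⟨hi', hj'⟩, ht'⟩ := hx'
  have hmod := (ZMod.natCast_eq_natCast_iff _ _ _).1 heq
  have hp : p ∣ p ^ (a + 1) * q ^ (b + 1) := (dvd_pow_self p a.succ_ne_zero).mul_right _
  have hq : q ∣ p ^ (a + 1) * q ^ (b + 1) := (dvd_pow_self q b.succ_ne_zero).mul_left _
  obtain rfl : i = i' := Nat.ModEq.eq_of_lt_of_lt
    ((gridStart_add_modEq_left h a b len i j t).symm.trans <|
      (hmod.of_dvd hp).trans (gridStart_add_modEq_left h a b len i' j' t')) hi hi'
  obtain rfl : j = j' := Nat.ModEq.eq_of_lt_of_lt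
    ((gridStart_add_modEq_right h a b len i j t).symm.trans <|
      (hmod.of_dvd hq).trans (gridStart_add_modEq_right h a b len i j' t')) hj hj'
  have hM : p ^ (a + 1) * q ^ (b + 1) = p * q * (p ^ a * q ^ b) := by ring
  have htt : t ≡ t' [MOD p ^ a * q ^ b] := by
    rw [hM] at hmod
    have hpq : p * q ≠ 0 := mul_ne_zero (Nat.ne_zero_of_lt hi) (Nat.ne_zero_of_lt hj)
    exact Nat.ModEq.mul_left_cancel' hpq (Nat.ModEq.add_left_cancel' _ hmod)
  obtain rfl : t = t' := htt.eq_of_lt_of_lt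
    (ht.trans_le (hlen i hi j hj)) (ht'.trans_le (hlen i hi j hj))
  rfl

theorem card_progressionGrid (hlen : ∀ i < p, ∀ j < q, len i j ≤ p ^ a * q ^ b) :
    (progressionGrid h a b len).card = ∑ i ∈ range p, ∑ j ∈ range q, len i j := by
  rw [progressionGrid, card_image_of_injOn (injOn_gridIndex h hlen), gridIndex, card_sigma,
    sum_product]
  simp only [card_range]

theorem aeval_zmaskPoly_progressionGrid {R : Type*} [CommRing R] {ζ : R}
    (hlen : ∀ i < p, ∀ j < q, len i j ≤ p ^ a * q ^ b)
    (hζ : ζ ^ (p ^ (a + 1) * q ^ (b + 1)) = 1) :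
    aeval ζ (zmaskPoly _ (progressionGrid h a b len)) =
      ∑ i ∈ range p, ∑ j ∈ range q, ∑ t ∈ range (len i j),
        ζ ^ (gridStart h a b len i j + p * q * t) := by
  rw [progressionGrid, aeval_zmaskPoly_image_natCast hζ (injOn_gridIndex h hlen), gridIndex,
    sum_sigma, sum_product]

theorem cyclotomic_dvd_zmaskPoly_progressionGrid_of_rows {s : ℕ} (hp : 0 < p)
    (hlen : ∀ i < p, ∀ j < q, len i j ≤ p ^ a * q ^ b)
    (hrow : ∀ i < p, p ^ a ∣ ∑ j ∈ range q, len i j) (hs : s ∣ p ^ (a + 1)) (hs' : ¬ s ∣ p * q) :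
    cyclotomic s ℤ ∣ zmaskPoly _ (progressionGrid h a b len) := by
  have hpos : 0 < s := Nat.pos_of_dvd_of_pos hs (by positivity)
  have hζ := Complex.isPrimitiveRoot_exp s hpos.ne'
  rw [cyclotomic_dvd_iff_aeval_eq_zero hζ hpos, aeval_zmaskPoly_progressionGrid h hlen
    ((hζ.pow_eq_one_iff_dvd _).2 (hs.mul_right _))]
  refine sum_eq_zero fun i hi => sum_pow_consecutive_progressions_eq_zero
    ((hζ.pow_eq_one_iff_dvd _).2 hs) (mt (hζ.pow_eq_one_iff_dvd _).1 hs')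
    (fun j _ => gridStart_modEq_row h a b len i j) ?_
  rw [pow_succ']
  exact mul_dvd_mul (dvd_mul_right p q) (hrow i (mem_range.1 hi))

theorem cyclotomic_dvd_zmaskPoly_progressionGrid_of_columns {s : ℕ} (hq : 0 < q)
    (hlen : ∀ i < p, ∀ j < q, len i j ≤ p ^ a * q ^ b)
    (hcol : ∀ j < q, q ^ b ∣ ∑ i ∈ range p, len i j) (hs : s ∣ q ^ (b + 1)) (hs' : ¬ s ∣ p * q) :
    cyclotomic s ℤ ∣ zmaskPoly _ (progressionGrid h a b len) := by
  have hpos : 0 < s := Nat.pos_of_dvd_of_pos hs (by positivity)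
  have hζ := Complex.isPrimitiveRoot_exp s hpos.ne'
  rw [cyclotomic_dvd_iff_aeval_eq_zero hζ hpos, aeval_zmaskPoly_progressionGrid h hlen
    ((hζ.pow_eq_one_iff_dvd _).2 (hs.mul_left _)), sum_comm]
  refine sum_eq_zero fun j hj => sum_pow_consecutive_progressions_eq_zero
    ((hζ.pow_eq_one_iff_dvd _).2 hs) (mt (hζ.pow_eq_one_iff_dvd _).1 hs')
    (fun i _ => gridStart_modEq_column h a b len i j) ?_
  rw [pow_succ']
  exact mul_dvd_mul (dvd_mul_left q p) (hcol j (mem_range.1 hj))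

theorem cyclotomic_mul_dvd_zmaskPoly_progressionGrid (hp : 1 < p) (hq : 1 < q) {u v : ℕ → ℕ}
    (hlen : ∀ i < p, ∀ j < q, u i + v j ≤ p ^ a * q ^ b) :
    cyclotomic (p * q) ℤ ∣ zmaskPoly _ (progressionGrid h a b fun i j => u i + v j) := by
  obtain ⟨α, hα⟩ : ∃ α : ℂ, IsPrimitiveRoot α p := ⟨_, Complex.isPrimitiveRoot_exp p (by lia)⟩
  obtain ⟨β, hβ⟩ : ∃ β : ℂ, IsPrimitiveRoot β q := ⟨_, Complex.isPrimitiveRoot_exp q (by lia)⟩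
  have hζ : IsPrimitiveRoot (α * β) (p * q) := isPrimitiveRoot_mul_of_coprime hα hβ h
  have hM : p * q ∣ p ^ (a + 1) * q ^ (b + 1) :=
    mul_dvd_mul (dvd_pow_self p a.succ_ne_zero) (dvd_pow_self q b.succ_ne_zero)
  have hterm : ∀ i j t, (α * β) ^ (gridStart h a b (fun i j => u i + v j) i j + p * q * t) =
      α ^ i * β ^ j := fun i j t => by
    rw [mul_pow, pow_eq_pow_of_modEq (gridStart_add_modEq_left h a b _ i j t) hα.pow_eq_one,
      pow_eq_pow_of_modEq (gridStart_add_modEq_right h a b _ i j t) hβ.pow_eq_one]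
  rw [cyclotomic_dvd_iff_aeval_eq_zero hζ (by positivity),
    aeval_zmaskPoly_progressionGrid h hlen ((hζ.pow_eq_one_iff_dvd _).2 hM)]
  simp only [hterm, sum_const, card_range, nsmul_eq_mul, Nat.cast_add]
  exact sum_add_mul_pow_mul_pow_eq_zero hα hβ hp hq (fun i => (u i : ℂ)) fun j => (v j : ℂ)

theorem le_of_sum_sum_range_eq {n : ℕ} (hsum : ∑ i ∈ range p, ∑ j ∈ range q, len i j = n) :
    ∀ i < p, ∀ j < q, len i j ≤ n := fun i hi j hj =>
  calc len i j ≤ ∑ j ∈ range q, len i j :=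
        single_le_sum_of_canonicallyOrdered (mem_range.2 hj)
    _ ≤ ∑ i ∈ range p, ∑ j ∈ range q, len i j :=
        single_le_sum_of_canonicallyOrdered (f := fun i => ∑ j ∈ range q, len i j)
          (mem_range.2 hi)
    _ = n := hsum

theorem card_progressionGrid_eq_prod (hp : p.Prime) (hq : q.Prime)
    (hsum : ∑ i ∈ range p, ∑ j ∈ range q, len i j = p ^ a * q ^ b) :
    ((progressionGrid h a b len).card : ℤ) =
      ∏ t ∈ higherPowers p a ∪ higherPowers q b, (cyclotomic t ℤ).eval 1 := by
  rw [card_progressionGrid h (le_of_sum_sum_range_eq hsum), hsum,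
    prod_union (disjoint_higherPowers hp hq ((Nat.coprime_primes hp hq).1 h) a b),
    prod_eval_one_cyclotomic_higherPowers hp, prod_eval_one_cyclotomic_higherPowers hq]
  push_cast
  rfl

theorem progressionGrid_nonempty (hp : 0 < p) (hq : 0 < q)
    (hsum : ∑ i ∈ range p, ∑ j ∈ range q, len i j = p ^ a * q ^ b) :
    (progressionGrid h a b len).Nonempty := by
  rw [← card_pos, card_progressionGrid h (le_of_sum_sum_range_eq hsum), hsum]
  positivity

theorem SAstar_progressionGrid (hp : p.Prime) (hq : q.Prime)
    (hrow : ∀ i < p, p ^ a ∣ ∑ j ∈ range q, len i j)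
    (hcol : ∀ j < q, q ^ b ∣ ∑ i ∈ range p, len i j)
    (hsum : ∑ i ∈ range p, ∑ j ∈ range q, len i j = p ^ a * q ^ b) :
    SAstar _ (progressionGrid h a b len) = (higherPowers p a ∪ higherPowers q b : Finset ℕ) := by
  have hlen := le_of_sum_sum_range_eq hsum
  refine SAstar_eq_of_card_eq_prod (progressionGrid_nonempty h hp.pos hq.pos hsum) (fun t ht => ?_)
    (card_progressionGrid_eq_prod h hp hq hsum)
  rcases mem_union.1 ht with ht | ht
  · exact ⟨isPrimePow_of_mem_higherPowers hp ht,
      cyclotomic_dvd_zmaskPoly_progressionGrid_of_rows h hp.pos hlen hrow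
        (dvd_of_mem_higherPowers ht) (not_dvd_mul_of_mem_higherPowers hp h ht)⟩
  · exact ⟨isPrimePow_of_mem_higherPowers hq ht,
      cyclotomic_dvd_zmaskPoly_progressionGrid_of_columns h hq.pos hlen hcol
        (dvd_of_mem_higherPowers ht) (mul_comm q p ▸ not_dvd_mul_of_mem_higherPowers hq h.symm ht)⟩

theorem hasUnsupportedDivisor_progressionGrid (hp : p.Prime) (hq : q.Prime) (ha : a ≠ 0)
    (hb : b ≠ 0) {u v : ℕ → ℕ} (hrow : ∀ i < p, p ^ a ∣ ∑ j ∈ range q, (u i + v j))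
    (hcol : ∀ j < q, q ^ b ∣ ∑ i ∈ range p, (u i + v j))
    (hsum : ∑ i ∈ range p, ∑ j ∈ range q, (u i + v j) = p ^ a * q ^ b) :
    HasUnsupportedDivisor _ (progressionGrid h a b fun i j => u i + v j) := by
  have hlen := le_of_sum_sum_range_eq hsum
  refine ⟨p * q, hp.two_le.trans (Nat.le_mul_of_pos_right p hq.pos),
    cyclotomic_mul_dvd_zmaskPoly_progressionGrid h hp.one_lt hq.one_lt hlen,
    fun r _ hdvd => ?_, fun r k hr hk hdvd _ hcyc => ?_⟩
  · rw [card_progressionGrid h hlen, hsum]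
    exact hdvd.trans (mul_dvd_mul (dvd_pow_self p ha) (dvd_pow_self q hb))
  · have hmem : r ^ k ∈ SAstar _ (progressionGrid h a b fun i j => u i + v j) :=
      ⟨hr.isPrimePow.pow (Nat.ne_zero_of_lt hk), hcyc⟩
    rw [SAstar_progressionGrid h hp hq hrow hcol hsum, mem_coe, mem_union] at hmem
    rcases hmem with hmem | hmem
    · exact not_dvd_mul_of_mem_higherPowers hp h hmem hdvd
    · exact not_dvd_mul_of_mem_higherPowers hq h.symm hmem (mul_comm p q ▸ hdvd)

end ProgressionGrid

theorem pow_dvd_of_add_pow_pred_eq_mul {p q d : ℕ} (hp : p.Prime) (hq : 0 < q)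
    (hpq : p.Coprime q) (hd : d + p ^ (q - 1) = p ^ (q - 1) * q ^ (p - 1)) : p ^ q ∣ d := by
  have hfermat : p ∣ q ^ (p - 1) - 1 := by
    have := Nat.ModEq.pow_totient hpq.symm
    rw [Nat.totient_prime hp] at this
    exact (Nat.modEq_iff_dvd' (Nat.pow_pos hq)).1 this.symm
  have hdeq : d = p ^ (q - 1) * (q ^ (p - 1) - 1) := by
    rw [Nat.mul_sub_one, ← hd, Nat.add_sub_cancel]
  rw [hdeq, ← pow_sub_one_mul hq.ne' p]
  exact mul_dvd_mul_left _ hfermat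

theorem exists_add_pow_add_pow_eq_mul {p q : ℕ} (hp : p.Prime) (hq : q.Prime)
    (h : p.Coprime q) :
    ∃ c, c + p ^ (q - 1) + q ^ (p - 1) = p ^ (q - 1) * q ^ (p - 1) ∧
      p ^ q ∣ c + q ^ (p - 1) ∧ q ^ p ∣ c + p ^ (q - 1) := by
  have hp' : 2 ≤ p ^ (q - 1) :=
    hp.two_le.trans (Nat.le_self_pow (Nat.sub_ne_zero_of_lt hq.one_lt) p)
  have hq' : 2 ≤ q ^ (p - 1) :=
    hq.two_le.trans (Nat.le_self_pow (Nat.sub_ne_zero_of_lt hp.one_lt) q)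
  obtain ⟨c, hc⟩ := Nat.exists_eq_add_of_le (Nat.add_le_mul hp' hq')
  refine ⟨c, by lia, pow_dvd_of_add_pow_pred_eq_mul hp hq.pos h (by lia),
    pow_dvd_of_add_pow_pred_eq_mul hq hp.pos h.symm ?_⟩
  rw [mul_comm, hc]
  ring

/-- The lengths are `c + p ^ q * [i = 0] + q ^ p * [j = 0]`, where the prescribed total forces
`c = p ^ (q - 1) * q ^ (p - 1) - p ^ (q - 1) - q ^ (p - 1)`. -/
theorem exists_additive_block_lengths {p q : ℕ} (hp : p.Prime) (hq : q.Prime)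
    (h : p.Coprime q) :
    ∃ u v : ℕ → ℕ, (∀ i, p ^ q ∣ ∑ j ∈ range q, (u i + v j)) ∧
      (∀ j, q ^ p ∣ ∑ i ∈ range p, (u i + v j)) ∧
      ∑ i ∈ range p, ∑ j ∈ range q, (u i + v j) = p ^ q * q ^ p := by
  have hppow : p * p ^ (q - 1) = p ^ q := mul_pow_sub_one hq.ne_zero p
  have hqpow : q * q ^ (p - 1) = q ^ p := mul_pow_sub_one hp.ne_zero q
  obtain ⟨c, hc, hcp, hcq⟩ := exists_add_pow_add_pow_eq_mul hp hq h
  let u : ℕ → ℕ := fun i => c + if i = 0 then p ^ q else 0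
  let v : ℕ → ℕ := fun j => if j = 0 then q ^ p else 0
  have hu : ∑ i ∈ range p, u i = p * (c + p ^ (q - 1)) := by
    simp [u, sum_add_distrib, hp.pos, mul_add, hppow]
  have hv : ∑ j ∈ range q, v j = q * q ^ (p - 1) := by
    simp [v, hq.pos, hqpow]
  refine ⟨u, v, fun i => ?_, fun j => ?_, ?_⟩
  · have hsum : ∑ j ∈ range q, (u i + v j) =
        q * (c + q ^ (p - 1)) + q * if i = 0 then p ^ q else 0 := by
      simp only [sum_add_distrib, hv, sum_const, card_range, smul_eq_mul, u]
      ring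
    rw [hsum]
    refine dvd_add (hcp.mul_left q) (Dvd.dvd.mul_left ?_ q)
    split_ifs <;> simp
  · simp only [sum_add_distrib, hu, sum_const, card_range, smul_eq_mul]
    refine dvd_add (hcq.mul_left p) (Dvd.dvd.mul_left ?_ p)
    simp only [v]
    split_ifs <;> simp
  · simp only [sum_add_distrib, hv, sum_const, card_range, smul_eq_mul, ← mul_sum, hu]
    calc q * (p * (c + p ^ (q - 1))) + p * (q * q ^ (p - 1))
        = p * q * (c + p ^ (q - 1) + q ^ (p - 1)) := by ring
      _ = p * p ^ (q - 1) * (q * q ^ (p - 1)) := by rw [hc]; ring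
      _ = p ^ q * q ^ p := by rw [hppow, hqpow]

theorem primeFactors_pow_mul_pow {p q m n : ℕ} (hp : p.Prime) (hq : q.Prime) (hm : m ≠ 0)
    (hn : n ≠ 0) : (p ^ m * q ^ n).primeFactors = {p, q} := by
  rw [Nat.primeFactors_mul (pow_ne_zero m hp.ne_zero) (pow_ne_zero n hq.ne_zero),
    Nat.primeFactors_prime_pow hm hp, Nat.primeFactors_prime_pow hn hq]
  rfl

theorem exists_T1_unsupported_two_primes_general {p q : ℕ} (hp : p.Prime) (hq : q.Prime)
    (hpq : p ≠ q) :
    ∃ (M : ℕ) (A : Finset (ZMod M)),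
      M.primeFactors = {p, q} ∧ A.Nonempty ∧ PropT1 M A ∧ HasUnsupportedDivisor M A := by
  have h : p.Coprime q := (Nat.coprime_primes hp hq).2 hpq
  obtain ⟨u, v, hu, hv, hsum⟩ := exists_additive_block_lengths hp hq h
  have hrow : ∀ i < p, p ^ q ∣ ∑ j ∈ range q, (u i + v j) := fun i _ => hu i
  have hcol : ∀ j < q, q ^ p ∣ ∑ i ∈ range p, (u i + v j) := fun j _ => hv j
  exact ⟨_, progressionGrid h q p fun i j => u i + v j,
    primeFactors_pow_mul_pow hp hq q.succ_ne_zero p.succ_ne_zero,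
    progressionGrid_nonempty h hp.pos hq.pos hsum,
    propT1_of_SAstar_eq (SAstar_progressionGrid h hp hq hrow hcol hsum)
      (card_progressionGrid_eq_prod h hp hq hsum),
    hasUnsupportedDivisor_progressionGrid h hp hq hq.ne_zero hp.ne_zero hrow hcol hsum⟩

end

/-- Theorem 1.8: there exist `M` with exactly two distinct prime divisors and a nonempty
`A ⊆ ℤ_M` satisfying (T1) with at least one unsupported cyclotomic divisor. -/
theorem exists_T1_unsupported_two_primes :
    ∃ (M : ℕ) (A : Finset (ZMod M)),
      M.primeFactors.card = 2 ∧ A.Nonempty ∧ PropT1 M A ∧ HasUnsupportedDivisor M A := by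
  obtain ⟨M, A, hM, hA⟩ :=
    exists_T1_unsupported_two_primes_general Nat.prime_two Nat.prime_three (by decide)
  exact ⟨M, A, by rw [hM]; rfl, hA⟩
end
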